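/- Let F be a multigraph, let k ≥ 1 and K ≥ 1 be integers, and let H = F^{2k-1}. There exists a constant L0, depending only on |V(H)|, k and K, such that for all L ≥ L0 the following holds: if G is an H-free K-almost-regular graph on n vertices (n sufficiently large) with minimum degree δ ≥ L^{100^k·|V(H)|}, then for every 2 ≤ ℓ ≤ k and every vertex v of G, the number of L-admissible but not L-good paths of length ℓ of the form v0 v v2 v3 … vℓ (i.e., with second vertex v) is at most 2(Kδ)^ℓ/f(ℓ-1,L). -/

import Mathlib

/-!
The theorem is proved by contradiction. Write `f = f(ℓ - 1, L)`, so that `f(ℓ, L) = f ^ 5`, let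
`D = K δ` bound all degrees, and suppose that more than `2 D ^ ℓ / f` admissible paths with second
vertex `v` fail to be good. Dropping the first vertex of such a path leaves a good path `Q` of
length `ℓ - 1` from `v`, and there are at most `D` first vertices and `D ^ (ℓ - 1)` paths `Q`. So
the bad pairs `(x, end of Q)`, `x ∈ N(v)`, have density at least `2 / f` (`ncard_le_bad`). Each
bad pair has more than `f ^ 5` admissible paths between its two vertices, of which at most `f ^ 2`
pass through a given vertex at a given inner position (`card_adm_through`). Hence bad pairs are
*robustly linked* by paths of length `ℓ`: any bounded set of other vertices can be avoided
(`Link`, `Bad.link`).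

Consider the pairs `(P, Q)`, where `P` is one of `⌈f ^ 5⌉` selected admissible paths from some
`x' ∈ N(v)` to the end of `Q` and these endpoints form a bad pair (`pairsPQ`). By Cauchy–Schwarz at
least `D / f` vertices `x ∈ N(v)` form a bad pair with the end of `Q` for a proportion `1 / f` of
all these `(P, Q)` (`many_popular`). Let `0 ≤ b < ℓ`. For such an `x`, and for a proportion
`1 / (2 f)` of all `(P, Q)`, the vertex `w` that lies `b` steps before the end of `P` is robustly linked to
`x` by paths of length `ℓ + b`, formed by a link from `x` to the end of `P` followed by `P`
backwards. This can only fail if the last `b` vertices of every `P` through `w` whose end forms a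
bad pair with `x` meet a fixed bounded set. Prescribing a vertex of `P` after `w` costs a factor
`D`, so the exceptional `w` carry few such pairs (`link_of_many`, `linked_weight`). A weighted
Kővári–Sós–Turán argument (`exists_many`) then yields a large set of vertices `x` that are all
linked to a common large set of vertices `w`.

Writing `k = ℓ a + b` with `0 ≤ b < ℓ`, this is applied with this `b` and again with `b = 0`. The
result is a large set `X` with two complete patterns of links, of lengths `ℓ + b` and `ℓ`, to
auxiliary sets. Going from `X` to an auxiliary set and back, once by links of length `ℓ + b` and
`a - 1` times by links of length `ℓ`, links any two vertices of `X` by paths of length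
`2 (ℓ + b) + 2 ℓ (a - 1) = 2 k` (`link_all`). Since robust links avoid `|V(H)|` given vertices, a
greedy choice of paths embeds `H` with its branch vertices in `X` (`contains_of_links`), which
contradicts `H`-freeness.
-/

open SimpleGraph

variable {V : Type*} [Fintype V] [DecidableEq V]

/-- The restriction of `p : ℕ → V` to `[0, ℓ]` is a path in `G`: consecutive vertices are
adjacent and all vertices `p 0, …, p ℓ` are distinct. -/
def PathSeq (G : SimpleGraph V) (ℓ : ℕ) (p : ℕ → V) : Prop :=
  (∀ i, i < ℓ → G.Adj (p i) (p (i + 1))) ∧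
  ∀ i j, i < j → j ≤ ℓ → p i ≠ p j

/-- `p` is padded beyond index `ℓ`; used so that each finite sequence corresponds to a
unique function `ℕ → V` when counting. -/
def PadSeq (ℓ : ℕ) (p : ℕ → V) : Prop := ∀ i, ℓ ≤ i → p i = p ℓ

/-- `f(ℓ, L) = L^(5^ℓ)`. -/
noncomputable def fBound (ℓ : ℕ) (L : ℝ) : ℝ := L ^ (5 ^ ℓ)

/-- The recursive notion of an `L`-good path of length `ℓ` (as a sequence `p 0, …, p ℓ`):
`p` is a path, every proper subpath is `L`-good, and the number of `L`-admissible paths of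
length `ℓ` from `p 0` to `p ℓ` is at most `f(ℓ, L)`. -/
def Good (G : SimpleGraph V) (L : ℝ) (ℓ : ℕ) (p : ℕ → V) : Prop :=
  (PathSeq G ℓ p ∧
    ∀ i j, i < j → j ≤ ℓ → ¬(i = 0 ∧ j = ℓ) → Good G L (j - i) (fun a => p (i + a))) ∧
  (Set.ncard {q : ℕ → V | q 0 = p 0 ∧ q ℓ = p ℓ ∧ PadSeq ℓ q ∧ PathSeq G ℓ q ∧
      ∀ i j, i < j → j ≤ ℓ → ¬(i = 0 ∧ j = ℓ) → Good G L (j - i) (fun a => q (i + a))} : ℝ)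
    ≤ fBound ℓ L
termination_by ℓ
decreasing_by all_goals omega

/-- `L`-admissible: a path all of whose proper subpaths are `L`-good. -/
def Admissible (G : SimpleGraph V) (L : ℝ) (ℓ : ℕ) (p : ℕ → V) : Prop :=
  PathSeq G ℓ p ∧
    ∀ i j, i < j → j ≤ ℓ → ¬(i = 0 ∧ j = ℓ) → Good G L (j - i) (fun a => p (i + a))

/-- There exist `N` pairwise internally vertex-disjoint paths of length `m` from `x` to `y`. -/
def ManyDisjointPaths (G : SimpleGraph V) (m : ℕ) (x y : V) (N : ℕ) : Prop :=
  ∃ P : Fin N → (ℕ → V),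
    (∀ a, PathSeq G m (P a) ∧ P a 0 = x ∧ P a m = y) ∧
    (∀ a b, a ≠ b → ∃ i, i ≤ m ∧ P a i ≠ P b i) ∧
    ∀ a b, a ≠ b → ∀ i j, 0 < i → i < m → 0 < j → j < m → P a i ≠ P b j

/-- A pair `(x, y)` of distinct vertices is `(i,j)`-rich (with parameters `k`, `h`, `K`, `δ`). -/
def Rich (G : SimpleGraph V) (k h : ℕ) (K δ : ℝ) (i j : ℕ) (x y : V) : Prop :=
  x ≠ y ∧
  ((2 * (i + j) * h * (2 * k + 1) + 2 * (i + 1) * j : ℕ) : ℝ) *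
      (K * δ) ^ ((i : ℤ) + (j : ℤ) - 1) <
    (Set.ncard {PQ : (ℕ → V) × (ℕ → V) |
      PathSeq G i PQ.1 ∧ PQ.1 0 = x ∧ PadSeq i PQ.1 ∧
      PathSeq G j PQ.2 ∧ PQ.2 0 = y ∧ PadSeq j PQ.2 ∧
      ManyDisjointPaths G (2 * k - i - j) (PQ.1 i) (PQ.2 j) ((h + 2) * (2 * k + 1) + 1)} : ℝ)

/-- `(x, y)` is an `(ℓ, L)`-bad pair: there is an `L`-admissible but not `L`-good path of
length `ℓ` from `x` to `y`. -/
def Bad (G : SimpleGraph V) (L : ℝ) (ℓ : ℕ) (x y : V) : Prop :=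
  ∃ p : ℕ → V, p 0 = x ∧ p ℓ = y ∧ Admissible G L ℓ p ∧ ¬ Good G L ℓ p

/-- `G` contains the `(s-1)`-subdivision of the multigraph on `Fin t` with multiplicity
function `m` as a subgraph: each parallel edge between `a < b` is replaced by a path of
length `s`, these paths being pairwise internally vertex-disjoint, with internal vertices
distinct from all branch vertices. -/
def ContainsMultiSubdiv (G : SimpleGraph V) (t : ℕ) (m : Fin t → Fin t → ℕ) (s : ℕ) : Prop :=
  ∃ (φ : Fin t → V) (π : (a : Fin t) → (b : Fin t) → Fin (m a b) → (ℕ → V)),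
    Function.Injective φ ∧
    (∀ a b, a < b → ∀ c, PathSeq G s (π a b c) ∧ π a b c 0 = φ a ∧ π a b c s = φ b) ∧
    (∀ a b, a < b → ∀ c, ∀ i, 0 < i → i < s → ∀ d, π a b c i ≠ φ d) ∧
    (∀ a b, a < b → ∀ a' b', a' < b' → ∀ (c : Fin (m a b)) (c' : Fin (m a' b')),
      (a, b, (c : ℕ)) ≠ (a', b', (c' : ℕ)) →
      ∀ i i', 0 < i → i < s → 0 < i' → i' < s → π a b c i ≠ π a' b' c' i')

/-- The number of vertices of `H = F^{2k-1}` where `F` is the multigraph on `Fin t` with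
multiplicity function `m`: the `t` branch vertices plus `2k - 1` internal vertices for each
edge (counted with multiplicity). -/
def nH (t k : ℕ) (m : Fin t → Fin t → ℕ) : ℕ :=
  t + (2 * k - 1) * ∑ p : Fin t × Fin t, if p.1 < p.2 then m p.1 p.2 else 0

/-- The minimum degree of `G`. -/
noncomputable def minDeg (G : SimpleGraph V) : ℕ :=
  sInf {d | ∃ v, (G.neighborSet v).ncard = d}

/-- The maximum degree of `G`. -/
noncomputable def maxDeg (G : SimpleGraph V) : ℕ :=
  sSup {d | ∃ v, (G.neighborSet v).ncard = d}

/-- Adjacency in the auxiliary graph `𝒢_ℓ(v)`: the `2k+1` vertices `u 0 = v, u 1, …, u k,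
u' 1, …, u' k` are all distinct and there exist `0 ≤ i, j ≤ k-1` such that the pair
`(u ℓ, u' ℓ)` is `(i,j)`-rich (symmetrised so that this defines a graph). -/
def AuxAdj (G : SimpleGraph V) (k h : ℕ) (K δ : ℝ) (ℓ : Fin (k + 1))
    (u u' : Fin (k + 1) → V) : Prop :=
  Function.Injective u ∧ Function.Injective u' ∧
  (∀ a b : Fin (k + 1), a ≠ 0 → b ≠ 0 → u a ≠ u' b) ∧
  ∃ i j : ℕ, i < k ∧ j < k ∧
    (Rich G k h K δ i j (u ℓ) (u' ℓ) ∨ Rich G k h K δ i j (u' ℓ) (u ℓ))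

/-- `r` satisfies the `k`-colour Ramsey property for `t`: every `k`-colouring of the edges of
the complete graph on `r` vertices contains a monochromatic complete graph on `t` vertices. -/
def RamseyProp (k t r : ℕ) : Prop :=
  ∀ χ : Fin r → Fin r → Fin k, (∀ a b, χ a b = χ b a) →
    ∃ (col : Fin k) (s : Finset (Fin r)), s.card = t ∧
      ∀ a ∈ s, ∀ b ∈ s, a ≠ b → χ a b = col

set_option linter.unusedSectionVars false

/-! ### Truncating, shifting and reversing sequences -/

/-- The first `j` steps of `p`, padded beyond index `j`. -/
def seqTake (j : ℕ) (p : ℕ → V) : ℕ → V := fun i => p (min i j)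

/-- The sequence `p` with its first `j` steps removed. -/
def seqDrop (j : ℕ) (p : ℕ → V) : ℕ → V := fun i => p (j + i)

/-- The first `j` steps of `p` traversed backwards. Truncated subtraction makes it padded
beyond index `j`. -/
def seqRev (j : ℕ) (p : ℕ → V) : ℕ → V := fun i => p (j - i)

/-- The concatenation of the first `m` steps of `p` with `q`. -/
def seqCat (m : ℕ) (p q : ℕ → V) : ℕ → V := fun i => if i ≤ m then p i else q (i - m)

lemma padSeq_take (j : ℕ) (p : ℕ → V) : PadSeq j (seqTake j p) := by
  intro i hi
  simp [seqTake, hi]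

lemma padSeq_drop {m j : ℕ} (hj : j ≤ m) {p : ℕ → V} (hp : PadSeq m p) :
    PadSeq (m - j) (seqDrop j p) := by
  intro i hi
  have h1 := hp (j + i) (by omega)
  have h2 : j + (m - j) = m := by omega
  simp [seqDrop, h1, h2]

lemma padSeq_rev (j : ℕ) (p : ℕ → V) : PadSeq j (seqRev j p) := by
  intro i hi
  have h : j - i = 0 := by omega
  simp [seqRev, h]

lemma padSeq_ext {m : ℕ} {p q : ℕ → V} (hp : PadSeq m p) (hq : PadSeq m q)
    (h : ∀ i, i ≤ m → p i = q i) : p = q := by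
  funext i
  rcases le_total i m with hi | hi
  · exact h i hi
  · rw [hp i hi, hq i hi, h m le_rfl]

lemma finite_padSeq (m : ℕ) : {p : ℕ → V | PadSeq m p}.Finite := by
  refine Set.Finite.of_finite_image (f := fun p (i : Fin (m + 1)) => p i) (Set.toFinite _) ?_
  intro p hp q hq h
  refine padSeq_ext hp hq fun i hi => ?_
  exact congrFun h ⟨i, by omega⟩

lemma pathSeq_congr {G : SimpleGraph V} {m : ℕ} {p q : ℕ → V} (h : ∀ i, i ≤ m → p i = q i)
    (hp : PathSeq G m p) : PathSeq G m q := by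
  refine ⟨fun i hi => ?_, fun i j hij hj => ?_⟩
  · rw [← h i (by omega), ← h (i + 1) (by omega)]; exact hp.1 i hi
  · rw [← h i (by omega), ← h j (by omega)]; exact hp.2 i j hij hj

lemma pathSeq_drop {G : SimpleGraph V} {m j : ℕ} {p : ℕ → V} (hp : PathSeq G m p) :
    PathSeq G (m - j) (seqDrop j p) := by
  refine ⟨fun i hi => ?_, fun i i' hij hj => ?_⟩
  · exact hp.1 (j + i) (by omega)
  · exact hp.2 (j + i) (j + i') (by omega) (by omega)

lemma pathSeq_rev {G : SimpleGraph V} {m : ℕ} {p : ℕ → V} (hp : PathSeq G m p) :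
    PathSeq G m (seqRev m p) := by
  refine ⟨fun i hi => ?_, fun i j hij hj => ?_⟩
  · have := (hp.1 (m - (i + 1)) (by omega)).symm
    have h : m - (i + 1) + 1 = m - i := by omega
    rw [h] at this
    exact this
  · exact (hp.2 (m - j) (m - i) (by omega) (by omega)).symm

lemma pathSeq_cat {G : SimpleGraph V} {m m' : ℕ} {p q : ℕ → V} (hp : PathSeq G m p)
    (hq : PathSeq G m' q) (hpq : p m = q 0)
    (hdis : ∀ i j, i < m → j ≤ m' → p i ≠ q j) :
    PathSeq G (m + m') (seqCat m p q) := by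
  refine ⟨fun i hi => ?_, fun i j hij hj => ?_⟩
  · rcases lt_trichotomy i m with h | h | h
    · simpa [seqCat, h.le, Nat.succ_le_of_lt h] using hp.1 i h
    · subst h
      have := hq.1 0 (by omega)
      simpa [seqCat, hpq] using this
    · have h1 := hq.1 (i - m) (by omega)
      have h2 : i - m + 1 = i + 1 - m := by omega
      rw [h2] at h1
      simpa [seqCat, show ¬ i ≤ m by omega, show ¬ i + 1 ≤ m by omega] using h1
  · by_cases h1 : j ≤ m
    · simpa [seqCat, h1, show i ≤ m by omega] using hp.2 i j hij h1
    · by_cases h2 : i < m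
      · simpa [seqCat, h1, h2.le] using hdis i (j - m) h2 (by omega)
      · by_cases h3 : i = m
        · subst h3
          simpa [seqCat, h1, hpq] using hq.2 0 (j - i) (by omega) (by omega)
        · simpa [seqCat, h1, show ¬ i ≤ m by omega] using
            hq.2 (i - m) (j - m) (by omega) (by omega)

/-! ### Robust links -/

/-- `x` and `y` are robustly linked by paths of length `m`: if they are distinct, then any set
of at most `c` other vertices can be avoided by a path of length `m` from `x` to `y`. -/
def Link (G : SimpleGraph V) (c m : ℕ) (x y : V) : Prop :=
  x ≠ y → ∀ U : Finset V, U.card ≤ c → x ∉ U → y ∉ U →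
    ∃ p, PathSeq G m p ∧ p 0 = x ∧ p m = y ∧ ∀ i, i ≤ m → p i ∉ U

lemma Link.symm {G : SimpleGraph V} {c m : ℕ} {x y : V} (h : Link G c m x y) :
    Link G c m y x := by
  intro hne U hU hy hx
  obtain ⟨p, hp, h0, hm, hav⟩ := h hne.symm U hU hx hy
  exact ⟨seqRev m p, pathSeq_rev hp, by simp [seqRev, hm], by simp [seqRev, h0],
    fun i _ => hav _ (by omega)⟩

lemma Link.mono {G : SimpleGraph V} {c c' m : ℕ} {x y : V} (h : Link G c m x y)
    (hc : c' ≤ c) : Link G c' m x y :=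
  fun hne U hU => h hne U (hU.trans hc)

/-- Two vertices linked to all members of a large set are linked by the concatenated paths:
some member of the set avoids the forbidden vertices. -/
lemma link_trans {G : SimpleGraph V} {c c' m m' : ℕ} {x y : V} (S : Finset V)
    (hS : c + 3 ≤ S.card) (hc : c + m + 1 ≤ c')
    (h1 : ∀ z ∈ S, Link G c' m x z) (h2 : ∀ z ∈ S, Link G c' m' z y) :
    Link G c (m + m') x y := by
  intro hne U hU hx hy
  obtain ⟨z, hzS, hz⟩ : ∃ z ∈ S, z ∉ insert x (insert y U) := by
    apply Finset.exists_mem_notMem_of_card_lt_card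
    have := Finset.card_insert_le x (insert y U)
    have := Finset.card_insert_le y U
    omega
  simp only [Finset.mem_insert, not_or] at hz
  obtain ⟨hzx, hzy, hzU⟩ := hz
  obtain ⟨p, hp, hp0, hpm, hpav⟩ := h1 z hzS (Ne.symm hzx) (insert y U)
    ((Finset.card_insert_le _ _).trans (by omega)) (by simp [hne, hx]) (by simp [hzy, hzU])
  have hpy : ∀ i, i ≤ m → p i ≠ y := fun i hi h => hpav i hi (by simp [h])
  obtain ⟨q, hq, hq0, hqm, hqav⟩ := h2 z hzS hzy (U ∪ (Finset.range m).image p)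
    (by
      have h3 := Finset.card_union_le U ((Finset.range m).image p)
      have h4 : ((Finset.range m).image p).card ≤ m := by
        simpa using Finset.card_image_le (s := Finset.range m) (f := p)
      omega)
    (by
      simp only [Finset.mem_union, Finset.mem_image, Finset.mem_range, not_or, not_exists,
        not_and]
      exact ⟨hzU, fun i hi h => hp.2 i m hi le_rfl (h.trans hpm.symm)⟩)
    (by
      simp only [Finset.mem_union, Finset.mem_image, Finset.mem_range, not_or, not_exists,
        not_and]
      exact ⟨hy, fun i hi h => hpy i hi.le h⟩)
  have hqav' : ∀ i, i ≤ m' → q i ∉ U ∧ ∀ j, j < m → p j ≠ q i := by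
    intro i hi
    have := hqav i hi
    simp only [Finset.mem_union, Finset.mem_image, Finset.mem_range, not_or, not_exists,
      not_and] at this
    exact this
  refine ⟨seqCat m p q, pathSeq_cat hp hq (hpm.trans hq0.symm)
    fun i j hi hj => (hqav' j hj).2 i hi, by simp [seqCat, hp0], ?_, ?_⟩
  · by_cases h : m' = 0
    · subst h
      simp [seqCat, hpm, ← hqm, hq0]
    · simp [seqCat, h, hqm]
  · intro i hi
    by_cases h : i ≤ m
    · simp only [seqCat, h, if_true]
      exact fun hU => hpav i h (by simp [hU])
    · simp only [seqCat, h, if_false]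
      exact (hqav' (i - m) (by omega)).1

/-- A complete bipartite pattern of links of length `ℓ` and another of links of length
`ℓ + b`, with a common side `X`, links all pairs in `X` by paths of length `2 (ℓ a + b)`. -/
lemma link_all {G : SimpleGraph V} {h k ℓ a b : ℕ} (X W₀ W : Finset V) (ha : 1 ≤ a)
    (hℓ : 1 ≤ ℓ) (hk : ℓ * a + b = k)
    (hX : h + (k + 1) * (2 * k + 1) + 3 ≤ X.card)
    (hW₀ : h + (k + 1) * (2 * k + 1) + 3 ≤ W₀.card)
    (hW : h + (k + 1) * (2 * k + 1) + 3 ≤ W.card)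
    (h₀ : ∀ x ∈ X, ∀ w ∈ W₀, Link G (h + (k + 1) * (2 * k + 1)) ℓ x w)
    (h₁ : ∀ x ∈ X, ∀ w ∈ W, Link G (h + (k + 1) * (2 * k + 1)) (ℓ + b) x w) :
    ∀ x ∈ X, ∀ y ∈ X, Link G h (2 * k) x y := by
  have hℓa : ℓ ≤ ℓ * a := Nat.le_mul_of_pos_right _ ha
  have haℓ : a ≤ ℓ * a := Nat.le_mul_of_pos_left _ hℓ
  set C := h + (k + 1) * (2 * k + 1) with hC
  have step : ∀ c, c + (2 * k + 1) ≤ C → ∀ x ∈ X, ∀ y ∈ X, Link G c (ℓ + ℓ) x y := by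
    intro c hc x hx y hy
    exact link_trans (c' := C) W₀ (by omega) (by omega) (fun z hz => h₀ x hx z hz)
      (fun z hz => (h₀ y hy z hz).symm)
  have stepb : ∀ c, c + (2 * k + 1) ≤ C → ∀ x ∈ X, ∀ y ∈ X,
      Link G c ((ℓ + b) + (ℓ + b)) x y := by
    intro c hc x hx y hy
    exact link_trans (c' := C) W (by omega) (by omega) (fun z hz => h₁ x hx z hz)
      (fun z hz => (h₁ y hy z hz).symm)
  have iter : ∀ j c, c + (j + 1) * (2 * k + 1) ≤ C → ∀ x ∈ X, ∀ y ∈ X,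
      Link G c ((ℓ + ℓ) * (j + 1)) x y := by
    intro j
    induction j with
    | zero => intro c hc; simpa using step c (by omega)
    | succ j ih =>
      intro c hc x hx y hy
      have e : (ℓ + ℓ) * (j + 1 + 1) = (ℓ + ℓ) + (ℓ + ℓ) * (j + 1) := by ring
      rw [e]
      have hc' : c + (2 * k + 1) + (j + 1) * (2 * k + 1) ≤ C := by
        calc _ = c + (j + 1 + 1) * (2 * k + 1) := by ring
          _ ≤ C := hc
      have hc'' : c + (2 * k + 1) + (2 * k + 1) ≤ C := by nlinarith
      exact link_trans (c' := c + (2 * k + 1)) X (by omega) (by omega)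
        (fun z hz => step _ hc'' x hx z hz) (fun z hz => ih _ hc' z hz y hy)
  intro x hx y hy
  obtain ⟨a', rfl⟩ : ∃ a', a = a' + 1 := ⟨a - 1, by omega⟩
  cases a' with
  | zero =>
    have e : 2 * k = (ℓ + b) + (ℓ + b) := by rw [← hk]; ring
    rw [e]
    exact stepb h (by nlinarith) x hx y hy
  | succ j =>
    have e : 2 * k = ((ℓ + b) + (ℓ + b)) + (ℓ + ℓ) * (j + 1) := by rw [← hk]; ring
    rw [e]
    have hj : j + 2 ≤ k := by omega
    have hm : (j + 2) * (2 * k + 1) ≤ k * (2 * k + 1) := Nat.mul_le_mul_right _ hj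
    have hc' : h + (2 * k + 1) + (j + 1) * (2 * k + 1) ≤ C := by nlinarith
    have hb : (ℓ + b) + (ℓ + b) ≤ 2 * k := by omega
    exact link_trans (c' := h + (2 * k + 1)) X (by omega) (by omega)
        (fun z hz => stepb _ (by nlinarith) x hx z hz) (fun z hz => iter j _ hc' z hz y hy)

/-! ### Embedding the subdivision -/

/-- Greedy choice of internally disjoint paths joining prescribed pairs of branch vertices. -/
lemma greedy_paths {ι : Type*} {G : SimpleGraph V} {c s : ℕ} (S : Finset V) (x y : ι → V)
    (hx : ∀ i, x i ∈ S) (hy : ∀ i, y i ∈ S) (hxy : ∀ i, x i ≠ y i)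
    (hl : ∀ i, Link G c s (x i) (y i)) (I : Finset ι) (hI : S.card + (s - 1) * I.card ≤ c) :
    ∃ π : ι → ℕ → V,
      (∀ i ∈ I, PathSeq G s (π i) ∧ π i 0 = x i ∧ π i s = y i ∧
        ∀ j, 0 < j → j < s → π i j ∉ S) ∧
      ∀ i ∈ I, ∀ i' ∈ I, i ≠ i' → ∀ j j', 0 < j → j < s → 0 < j' → j' < s →
        π i j ≠ π i' j' := by
  classical
  induction I using Finset.induction_on with
  | empty => exact ⟨fun i _ => x i, by simp, by simp⟩
  | insert e I he ih =>
    rw [Finset.card_insert_of_notMem he, Nat.mul_add, Nat.mul_one] at hI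
    obtain ⟨π, h1, h2⟩ := ih (by omega)
    let T : Finset V := I.biUnion fun i => (Finset.Ioo 0 s).image (π i)
    have hT : T.card ≤ (s - 1) * I.card := by
      rw [mul_comm]
      refine Finset.card_biUnion_le_card_mul _ _ _ fun i _ => ?_
      refine Finset.card_image_le.trans ?_
      simp
    have hTm : ∀ u, u ∈ T ↔ ∃ i ∈ I, ∃ j, (0 < j ∧ j < s) ∧ π i j = u := by
      intro u; simp [T]
    have hTS : ∀ u ∈ S, u ∉ T := by
      intro u hu huT
      obtain ⟨i, hi, j, hj, rfl⟩ := (hTm u).1 huT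
      exact (h1 i hi).2.2.2 j hj.1 hj.2 hu
    obtain ⟨p, hp, hp0, hps, hpav⟩ := hl e (hxy e) ((S \ {x e, y e}) ∪ T)
      (by
        have := Finset.card_union_le (S \ {x e, y e}) T
        have := Finset.card_le_card (Finset.sdiff_subset (s := S) (t := {x e, y e}))
        omega)
      (by simp [hTS _ (hx e)]) (by simp [hTS _ (hy e)])
    have hpS : ∀ j, 0 < j → j < s → p j ∉ S := by
      intro j hj hjs hS
      have hne0 : p j ≠ x e := fun h => hp.2 0 j hj hjs.le (hp0.trans h.symm)
      have hnes : p j ≠ y e := fun h => hp.2 j s hjs le_rfl (h.trans hps.symm)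
      exact hpav j hjs.le (by simp [hS, hne0, hnes])
    have hpT : ∀ j, j ≤ s → p j ∉ T := fun j hj hT' =>
      hpav j hj (Finset.mem_union_right _ hT')
    refine ⟨Function.update π e p, ?_, ?_⟩
    · intro i hi
      by_cases hie : i = e
      · subst hie; simpa using ⟨hp, hp0, hps, hpS⟩
      · have hiI : i ∈ I := (Finset.mem_insert.1 hi).resolve_left hie
        simpa [Function.update_of_ne hie] using h1 i hiI
    · intro i hi i' hi' hne j j' hj hjs hj' hjs'
      by_cases hie : i = e
      · subst hie
        have hiI : i' ∈ I := (Finset.mem_insert.1 hi').resolve_left (Ne.symm hne)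
        rw [Function.update_self, Function.update_of_ne (Ne.symm hne)]
        exact fun h => hpT j hjs.le ((hTm _).2 ⟨i', hiI, j', ⟨hj', hjs'⟩, h.symm⟩)
      · have hiI : i ∈ I := (Finset.mem_insert.1 hi).resolve_left hie
        by_cases hie' : i' = e
        · subst hie'
          rw [Function.update_self, Function.update_of_ne hne]
          exact fun h => hpT j' hjs'.le ((hTm _).2 ⟨i, hiI, j, ⟨hj, hjs⟩, h⟩)
        · have hiI' : i' ∈ I := (Finset.mem_insert.1 hi').resolve_left hie'
          rw [Function.update_of_ne hie, Function.update_of_ne hie']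
          exact h2 i hiI i' hiI' hne j j' hj hjs hj' hjs'

/-- A set of at least `t` vertices, pairwise robustly linked by paths of length `2k`, hosts the
subdivision. -/
lemma contains_of_links {G : SimpleGraph V} {t k : ℕ} (m : Fin t → Fin t → ℕ) (X : Finset V)
    (hX : t ≤ X.card) (hl : ∀ x ∈ X, ∀ y ∈ X, Link G (nH t k m) (2 * k) x y) :
    ContainsMultiSubdiv G t m (2 * k) := by
  classical
  obtain ⟨S, hSX, hS⟩ := Finset.exists_subset_card_eq hX
  let φ : Fin t → V := fun a => (S.equivFinOfCardEq hS).symm a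
  have hφ : Function.Injective φ :=
    Subtype.val_injective.comp (S.equivFinOfCardEq hS).symm.injective
  have hφS : ∀ a, φ a ∈ S := fun a => ((S.equivFinOfCardEq hS).symm a).2
  let ι := Σ p : {p : Fin t × Fin t // p.1 < p.2}, Fin (m p.1.1 p.1.2)
  have hcard : (Finset.univ : Finset ι).card =
      ∑ p : Fin t × Fin t, if p.1 < p.2 then m p.1 p.2 else 0 := by
    rw [Finset.card_univ, Fintype.card_sigma]
    simp only [Fintype.card_fin]
    rw [← Finset.sum_filter]
    exact (Finset.sum_subtype (Finset.univ.filter fun p : Fin t × Fin t => p.1 < p.2)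
      (by simp) (fun p => m p.1 p.2)).symm
  obtain ⟨π, h1, h2⟩ := greedy_paths (G := G) (c := nH t k m) (s := 2 * k) S
    (fun i : ι => φ i.1.1.1) (fun i : ι => φ i.1.1.2) (fun _ => hφS _) (fun _ => hφS _)
    (fun i h => (ne_of_lt i.1.2) (hφ h))
    (fun i => hl _ (hSX (hφS _)) _ (hSX (hφS _))) Finset.univ
    (by rw [hcard, hS]; exact le_rfl)
  refine ⟨φ, fun a b c => if hab : a < b then π ⟨⟨(a, b), hab⟩, c⟩ else fun _ => φ a,
    hφ, ?_, ?_, ?_⟩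
  · intro a b hab c
    have := h1 ⟨⟨(a, b), hab⟩, c⟩ (Finset.mem_univ _)
    simp only [hab, dif_pos]
    exact ⟨this.1, this.2.1, this.2.2.1⟩
  · intro a b hab c i hi his d h
    have := (h1 ⟨⟨(a, b), hab⟩, c⟩ (Finset.mem_univ _)).2.2.2 i hi his
    simp only [hab, dif_pos] at h
    rw [h] at this
    exact this (hφS d)
  · intro a b hab a' b' hab' c c' hne i i' hi his hi' his'
    simp only [hab, hab', dif_pos]
    refine h2 _ (Finset.mem_univ _) _ (Finset.mem_univ _) ?_ i i' hi his hi' his'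
    intro he
    apply hne
    have e1 : a = a' := congrArg (fun z : ι => z.1.1.1) he
    have e2 : b = b' := congrArg (fun z : ι => z.1.1.2) he
    have e3 : (c : ℕ) = c' := congrArg (fun z : ι => (z.2 : ℕ)) he
    simp [e1, e2, e3]

/-! ### Good and admissible paths -/

lemma good_iff {G : SimpleGraph V} {L : ℝ} {ℓ : ℕ} {p : ℕ → V} :
    Good G L ℓ p ↔ Admissible G L ℓ p ∧
      (Set.ncard {q : ℕ → V | q 0 = p 0 ∧ q ℓ = p ℓ ∧ PadSeq ℓ q ∧ Admissible G L ℓ q} : ℝ)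
        ≤ fBound ℓ L := by
  rw [Good]; rfl

lemma good_congr {G : SimpleGraph V} {L : ℝ} {ℓ : ℕ} {p q : ℕ → V}
    (h : ∀ i, i ≤ ℓ → p i = q i) (hp : Good G L ℓ p) : Good G L ℓ q := by
  induction ℓ using Nat.strong_induction_on generalizing p q with
  | _ ℓ ih =>
    rw [good_iff] at hp ⊢
    rw [← h 0 (by omega), ← h ℓ le_rfl]
    refine ⟨⟨pathSeq_congr h hp.1.1, fun i j hij hj hne => ?_⟩, hp.2⟩
    exact ih (j - i) (by omega) (fun a ha => h _ (by omega)) (hp.1.2 i j hij hj hne)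

lemma admissible_congr {G : SimpleGraph V} {L : ℝ} {ℓ : ℕ} {p q : ℕ → V}
    (h : ∀ i, i ≤ ℓ → p i = q i) (hp : Admissible G L ℓ p) : Admissible G L ℓ q :=
  ⟨pathSeq_congr h hp.1, fun i j hij hj hne =>
    good_congr (fun a ha => h _ (by omega)) (hp.2 i j hij hj hne)⟩

lemma Admissible.good_take {G : SimpleGraph V} {L : ℝ} {ℓ i : ℕ} {p : ℕ → V}
    (hp : Admissible G L ℓ p) (hi : 0 < i) (hiℓ : i < ℓ) : Good G L i (seqTake i p) := by
  have := hp.2 0 i hi hiℓ.le (by omega)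
  simp only [Nat.sub_zero, Nat.zero_add] at this
  exact good_congr (fun a ha => by simp [seqTake, ha]) this

lemma Admissible.good_drop {G : SimpleGraph V} {L : ℝ} {ℓ i : ℕ} {p : ℕ → V}
    (hp : Admissible G L ℓ p) (hi : 0 < i) (hiℓ : i < ℓ) : Good G L (ℓ - i) (seqDrop i p) :=
  hp.2 i ℓ hiℓ le_rfl (by omega)

/-- The finite set of (padded) `L`-admissible paths of length `ℓ` from `x` to `y`. -/
noncomputable def admSet (G : SimpleGraph V) (L : ℝ) (ℓ : ℕ) (x y : V) : Finset (ℕ → V) :=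
  ((finite_padSeq ℓ).subset (t := {q : ℕ → V | q 0 = x ∧ q ℓ = y ∧ PadSeq ℓ q ∧
    Admissible G L ℓ q}) fun _ hq => hq.2.2.1).toFinset

lemma mem_admSet {G : SimpleGraph V} {L : ℝ} {ℓ : ℕ} {x y : V} {q : ℕ → V} :
    q ∈ admSet G L ℓ x y ↔ q 0 = x ∧ q ℓ = y ∧ PadSeq ℓ q ∧ Admissible G L ℓ q := by
  simp [admSet]

lemma good_iff_card {G : SimpleGraph V} {L : ℝ} {ℓ : ℕ} {p : ℕ → V} :
    Good G L ℓ p ↔ Admissible G L ℓ p ∧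
      ((admSet G L ℓ (p 0) (p ℓ)).card : ℝ) ≤ fBound ℓ L := by
  rw [good_iff, admSet, Set.ncard_eq_toFinset_card _ ((finite_padSeq ℓ).subset fun _ hq => hq.2.2.1)]

lemma fBound_mono {L : ℝ} (hL : 1 ≤ L) {i j : ℕ} (hij : i ≤ j) : fBound i L ≤ fBound j L :=
  pow_le_pow_right₀ hL (Nat.pow_le_pow_right (by norm_num) hij)

lemma one_le_fBound {L : ℝ} (hL : 1 ≤ L) (i : ℕ) : 1 ≤ fBound i L :=
  one_le_pow₀ hL

lemma Bad.lt_card {G : SimpleGraph V} {L : ℝ} {ℓ : ℕ} {x y : V} (h : Bad G L ℓ x y) :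
    fBound ℓ L < (admSet G L ℓ x y).card := by
  obtain ⟨p, rfl, rfl, hp, hng⟩ := h
  by_contra hcon
  exact hng (good_iff_card.2 ⟨hp, not_lt.1 hcon⟩)

lemma Bad.ne {G : SimpleGraph V} {L : ℝ} {ℓ : ℕ} {x y : V} (h : Bad G L ℓ x y) (hℓ : 0 < ℓ) :
    x ≠ y := by
  obtain ⟨p, rfl, rfl, hp, -⟩ := h
  exact hp.1.2 0 ℓ hℓ le_rfl

/-- Since both halves of an admissible path are good, few admissible paths between two given
endpoints have a prescribed vertex in a prescribed inner position. -/
lemma card_adm_through {G : SimpleGraph V} {L : ℝ} (hL : 1 ≤ L) {ℓ i : ℕ} (hi : 0 < i)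
    (hiℓ : i < ℓ) (x y u : V) :
    (((admSet G L ℓ x y).filter fun q => q i = u).card : ℝ) ≤ fBound (ℓ - 1) L ^ 2 := by
  rcases ((admSet G L ℓ x y).filter fun q => q i = u).eq_empty_or_nonempty with h | ⟨q₀, hq₀⟩
  · rw [h]; simp only [Finset.card_empty, Nat.cast_zero]; positivity
  · rw [Finset.mem_filter, mem_admSet] at hq₀
    obtain ⟨⟨h0, hl, -, hadm⟩, hu⟩ := hq₀
    have g1 := (good_iff_card.1 (hadm.good_take hi hiℓ)).2
    have g2 := (good_iff_card.1 (hadm.good_drop hi hiℓ)).2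
    simp only [seqTake, seqDrop, min_self, Nat.zero_min, Nat.add_zero, h0, hu,
      show i + (ℓ - i) = ℓ by omega, hl] at g1 g2
    have hcard : ((admSet G L ℓ x y).filter fun q => q i = u).card ≤
        (admSet G L i x u ×ˢ admSet G L (ℓ - i) u y).card := by
      refine Finset.card_le_card_of_injOn (fun q => (seqTake i q, seqDrop i q)) ?_ ?_
      · intro q hq
        simp only [Finset.coe_filter, Set.mem_ofPred_eq, mem_admSet] at hq
        obtain ⟨⟨h0, hl, hpad, hadm⟩, hu⟩ := hq
        simp only [Finset.coe_product, Set.mem_prod, Finset.mem_coe, mem_admSet]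
        refine ⟨⟨by simp [seqTake, h0], by simp [seqTake, hu], padSeq_take _ _,
          (good_iff_card.1 (hadm.good_take hi hiℓ)).1⟩, by simp [seqDrop, hu], ?_,
          padSeq_drop hiℓ.le hpad, (good_iff_card.1 (hadm.good_drop hi hiℓ)).1⟩
        simp [seqDrop, show i + (ℓ - i) = ℓ by omega, hl]
      · intro q _ q' _ h
        simp only [Prod.mk.injEq] at h
        funext a
        rcases le_total a i with ha | ha
        · simpa [seqTake, ha] using congrFun h.1 a
        · simpa [seqDrop, ha] using congrFun h.2 (a - i)
    rw [Finset.card_product] at hcard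
    calc (((admSet G L ℓ x y).filter fun q => q i = u).card : ℝ)
        ≤ (admSet G L i x u).card * (admSet G L (ℓ - i) u y).card := by exact_mod_cast hcard
      _ ≤ fBound (ℓ - 1) L * fBound (ℓ - 1) L := by
        refine mul_le_mul (g1.trans (fBound_mono hL (by omega)))
          (g2.trans (fBound_mono hL (by omega))) (Nat.cast_nonneg _) ?_
        exact zero_le_one.trans (one_le_fBound hL _)
      _ = _ := by ring

open Classical in
/-- Bad pairs are robustly linked. -/
lemma Bad.link {G : SimpleGraph V} {L : ℝ} (hL : 1 ≤ L) {ℓ c : ℕ} {x y : V}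
    (h : Bad G L ℓ x y) (hc : (c : ℝ) * ℓ * fBound (ℓ - 1) L ^ 2 ≤ fBound ℓ L) :
    Link G c ℓ x y := by
  intro _ U hU hx hy
  by_contra! hcon
  have hsub : admSet G L ℓ x y ⊆ (U ×ˢ Finset.Ioo 0 ℓ).biUnion
      fun z => (admSet G L ℓ x y).filter fun q => q z.2 = z.1 := by
    intro q hq
    have hq' := mem_admSet.1 hq
    obtain ⟨i, hi, hiU⟩ := hcon q hq'.2.2.2.1 hq'.1 hq'.2.1
    have hi0 : i ≠ 0 := by rintro rfl; exact hx (hq'.1 ▸ hiU)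
    have hil : i ≠ ℓ := by rintro rfl; exact hy (hq'.2.1 ▸ hiU)
    simp only [Finset.mem_biUnion, Finset.mem_product, Finset.mem_Ioo, Finset.mem_filter]
    exact ⟨(q i, i), ⟨hiU, by omega, by omega⟩, hq, rfl⟩
  have h1 : ((admSet G L ℓ x y).card : ℝ) ≤ fBound ℓ L := by
    calc ((admSet G L ℓ x y).card : ℝ)
        ≤ ∑ z ∈ U ×ˢ Finset.Ioo 0 ℓ,
            (((admSet G L ℓ x y).filter fun q => q z.2 = z.1).card : ℝ) := by
          exact_mod_cast (Finset.card_le_card hsub).trans Finset.card_biUnion_le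
      _ ≤ ∑ z ∈ U ×ˢ Finset.Ioo 0 ℓ, fBound (ℓ - 1) L ^ 2 := by
          refine Finset.sum_le_sum fun z hz => ?_
          simp only [Finset.mem_product, Finset.mem_Ioo] at hz
          exact card_adm_through hL hz.2.1 hz.2.2 x y z.1
      _ = (U.card * (ℓ - 0 - 1 : ℕ) : ℝ) * fBound (ℓ - 1) L ^ 2 := by
          simp [Finset.card_product]
      _ ≤ (c * ℓ : ℝ) * fBound (ℓ - 1) L ^ 2 := by
          gcongr
          omega
      _ ≤ _ := hc
  exact absurd h.lt_card (not_lt.2 h1)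

/-! ### Counting walks -/

/-- The finite set of (padded) walks of length `m`. -/
noncomputable def walks (G : SimpleGraph V) (m : ℕ) : Finset (ℕ → V) :=
  ((finite_padSeq m).subset (t := {q : ℕ → V | PadSeq m q ∧ ∀ i, i < m → G.Adj (q i) (q (i + 1))})
    fun _ hq => hq.1).toFinset

lemma mem_walks {G : SimpleGraph V} {m : ℕ} {q : ℕ → V} :
    q ∈ walks G m ↔ PadSeq m q ∧ ∀ i, i < m → G.Adj (q i) (q (i + 1)) := by
  simp [walks]

lemma take_mem_walks {G : SimpleGraph V} {m j : ℕ} (hj : j ≤ m) {q : ℕ → V}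
    (hq : q ∈ walks G m) : seqTake j q ∈ walks G j := by
  refine mem_walks.2 ⟨padSeq_take _ _, fun i hi => ?_⟩
  have := (mem_walks.1 hq).2 i (by omega)
  simpa [seqTake, hi.le, Nat.succ_le_of_lt hi] using this

lemma drop_mem_walks {G : SimpleGraph V} {m j : ℕ} (hj : j ≤ m) {q : ℕ → V}
    (hq : q ∈ walks G m) : seqDrop j q ∈ walks G (m - j) := by
  refine mem_walks.2 ⟨padSeq_drop hj (mem_walks.1 hq).1, fun i hi => ?_⟩
  exact (mem_walks.1 hq).2 (j + i) (by omega)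

lemma take_drop_inj {j j' : ℕ} (hj : j' ≤ j + 1) {p q : ℕ → V} (h1 : seqTake j p = seqTake j q)
    (h2 : seqDrop j' p = seqDrop j' q) : p = q := by
  funext a
  by_cases ha : a ≤ j
  · simpa [seqTake, ha] using congrFun h1 a
  · simpa [seqDrop, show j' + (a - j') = a by omega] using congrFun h2 (a - j')

open Classical in
lemma card_walks_from {G : SimpleGraph V} {D : ℕ}
    (hD : ∀ u, (Finset.univ.filter fun w => G.Adj u w).card ≤ D) (m : ℕ) (x : V) :
    ((walks G m).filter fun q => q 0 = x).card ≤ D ^ m := by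
  induction m with
  | zero =>
    rw [pow_zero, Finset.card_le_one]
    intro p hp q hq
    rw [Finset.mem_filter, mem_walks] at hp hq
    refine padSeq_ext hp.1.1 hq.1.1 fun i hi => ?_
    rw [Nat.le_zero.1 hi, hp.2, hq.2]
  | succ m ih =>
    have h1 := Finset.card_le_mul_card_image (f := seqTake m)
      ((walks G (m + 1)).filter fun q => q 0 = x) D (by
        intro α _
        refine le_trans ?_ (hD (α m))
        refine Finset.card_le_card_of_injOn (fun q => q (m + 1)) ?_ ?_
        · intro q hq
          simp only [Finset.coe_filter, Finset.mem_filter, Set.mem_ofPred_eq, mem_walks] at hq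
          have := hq.1.1.2 m (by omega)
          simp only [Finset.coe_filter, Finset.mem_univ, true_and, Set.mem_ofPred_eq, ← hq.2]
          simpa [seqTake] using this
        · intro p hp q hq h
          simp only [Finset.coe_filter, Finset.mem_filter, Set.mem_ofPred_eq, mem_walks] at hp hq
          refine padSeq_ext hp.1.1.1 hq.1.1.1 fun i hi => ?_
          by_cases him : i ≤ m
          · simpa [seqTake, him] using congrFun (hp.2.trans hq.2.symm) i
          · rw [show i = m + 1 by omega]; exact h)
    have h2 : (((walks G (m + 1)).filter fun q => q 0 = x).image (seqTake m)).card ≤ D ^ m := by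
      refine (Finset.card_le_card fun α hα => ?_).trans ih
      obtain ⟨q, hq, rfl⟩ := Finset.mem_image.1 hα
      rw [Finset.mem_filter] at hq ⊢
      exact ⟨take_mem_walks (by omega) hq.1, by simp [seqTake, hq.2]⟩
    calc _ ≤ D * D ^ m := h1.trans (Nat.mul_le_mul_left _ h2)
      _ = D ^ (m + 1) := by ring

open Classical in
lemma card_walks_to {G : SimpleGraph V} {D : ℕ}
    (hD : ∀ u, (Finset.univ.filter fun w => G.Adj u w).card ≤ D) (m : ℕ) (x : V) :
    ((walks G m).filter fun q => q m = x).card ≤ D ^ m := by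
  refine le_trans ?_ (card_walks_from hD m x)
  refine Finset.card_le_card_of_injOn (seqRev m) ?_ ?_
  · intro q hq
    simp only [Finset.coe_filter, Set.mem_ofPred_eq, mem_walks] at hq ⊢
    refine ⟨⟨padSeq_rev _ _, fun i hi => ?_⟩, by simp [seqRev, hq.2]⟩
    have := (hq.1.2 (m - (i + 1)) (by omega)).symm
    rwa [show m - (i + 1) + 1 = m - i by omega] at this
  · intro p hp q hq h
    simp only [Finset.coe_filter, Set.mem_ofPred_eq, mem_walks] at hp hq
    refine padSeq_ext hp.1.1 hq.1.1 fun i hi => ?_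
    simpa [seqRev, show m - (m - i) = i by omega] using congrFun h (m - i)

open Classical in
/-- The walks of length `j` that start in `X` and end at `w`. -/
noncomputable def walksTo (G : SimpleGraph V) (X : Finset V) (j : ℕ) (w : V) : Finset (ℕ → V) :=
  (walks G j).filter fun q => q 0 ∈ X ∧ q j = w

open Classical in
lemma sum_walksTo {G : SimpleGraph V} {D : ℕ}
    (hD : ∀ u, (Finset.univ.filter fun w => G.Adj u w).card ≤ D) (X : Finset V) (j : ℕ) :
    ∑ w, (walksTo G X j w).card ≤ X.card * D ^ j := by
  have h1 : ∑ w, (walksTo G X j w).card = ((walks G j).filter fun q => q 0 ∈ X).card := by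
    rw [Finset.card_eq_sum_card_fiberwise (f := fun q : ℕ → V => q j) (t := Finset.univ)
      (by simp [Set.MapsTo])]
    simp only [walksTo, Finset.filter_filter]
  rw [h1]
  have h2 : ((walks G j).filter fun q => q 0 ∈ X) ⊆
      X.biUnion fun x => (walks G j).filter fun q => q 0 = x := by
    intro q hq
    rw [Finset.mem_filter] at hq
    simp only [Finset.mem_biUnion, Finset.mem_filter]
    exact ⟨q 0, hq.2, hq.1, rfl⟩
  exact (Finset.card_le_card h2).trans
    (Finset.card_biUnion_le_card_mul _ _ _ fun x _ => card_walks_from hD j x)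

open Classical in
lemma card_walks_through {G : SimpleGraph V} {D : ℕ}
    (hD : ∀ u, (Finset.univ.filter fun w => G.Adj u w).card ≤ D) (X : Finset V) {j b ℓ : ℕ}
    (hjb : j + b = ℓ) (w : V) :
    ((walks G ℓ).filter fun q => q 0 ∈ X ∧ q j = w).card ≤ D ^ ℓ := by
  have h : ((walks G ℓ).filter fun q => q 0 ∈ X ∧ q j = w).card ≤
      (((walks G j).filter fun q => q j = w) ×ˢ
        ((walks G b).filter fun q => q 0 = w)).card := by
    refine Finset.card_le_card_of_injOn (fun q => (seqTake j q, seqDrop j q)) ?_ ?_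
    · intro q hq
      simp only [Finset.coe_filter, Set.mem_ofPred_eq] at hq
      simp only [Finset.coe_product, Set.mem_prod, Finset.mem_coe, Finset.mem_filter]
      refine ⟨⟨take_mem_walks (by omega) hq.1, by simp [seqTake, hq.2.2]⟩, ?_,
        by simp [seqDrop, hq.2.2]⟩
      have := drop_mem_walks (j := j) (by omega) hq.1
      rwa [show ℓ - j = b by omega] at this
    · intro p _ q _ h
      simp only [Prod.mk.injEq] at h
      exact take_drop_inj (by omega) h.1 h.2
  rw [Finset.card_product] at h
  calc _ ≤ D ^ j * D ^ b := h.trans (Nat.mul_le_mul (card_walks_to hD j w) (card_walks_from hD b w))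
    _ = D ^ ℓ := by rw [← pow_add, hjb]

open Classical in
/-- Prescribing one further vertex after `w` saves a factor of `D` in the number of walks. -/
lemma card_walks_hit {G : SimpleGraph V} {D : ℕ}
    (hD : ∀ u, (Finset.univ.filter fun w => G.Adj u w).card ≤ D) (X : Finset V) {j b ℓ i : ℕ}
    (hjb : j + b = ℓ) (hi : 0 < i) (hib : i ≤ b) (w u : V) :
    ((walks G ℓ).filter fun q => q 0 ∈ X ∧ q j = w ∧ q (j + i) = u).card ≤
      (walksTo G X j w).card * D ^ (b - 1) := by
  have h : ((walks G ℓ).filter fun q => q 0 ∈ X ∧ q j = w ∧ q (j + i) = u).card ≤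
      (walksTo G X j w ×ˢ (((walks G (i - 1)).filter fun q => q 0 = w) ×ˢ
        ((walks G (b - i)).filter fun q => q 0 = u))).card := by
    refine Finset.card_le_card_of_injOn
      (fun q => (seqTake j q, seqTake (i - 1) (seqDrop j q), seqDrop i (seqDrop j q))) ?_ ?_
    · intro q hq
      simp only [Finset.coe_filter, Set.mem_ofPred_eq] at hq
      obtain ⟨hq, h0, hw, hu⟩ := hq
      have hd := drop_mem_walks (j := j) (by omega) hq
      rw [show ℓ - j = b by omega] at hd
      simp only [Finset.coe_product, Set.mem_prod, Finset.mem_coe, Finset.mem_filter, walksTo]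
      refine ⟨⟨take_mem_walks (by omega) hq, by simpa [seqTake] using h0,
        by simpa [seqTake] using hw⟩, ⟨take_mem_walks (by omega) hd, ?_⟩,
        drop_mem_walks hib hd, ?_⟩
      · simpa [seqTake, seqDrop] using hw
      · simpa [seqDrop] using hu
    · intro p _ q _ h
      simp only [Prod.mk.injEq] at h
      exact take_drop_inj (by omega) h.1 (take_drop_inj (by omega) h.2.1 h.2.2)
  rw [Finset.card_product, Finset.card_product] at h
  refine h.trans (Nat.mul_le_mul_left _ ?_)
  calc _ ≤ D ^ (i - 1) * D ^ (b - i) :=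
        Nat.mul_le_mul (card_walks_from hD _ w) (card_walks_from hD _ u)
    _ = D ^ (b - 1) := by rw [← pow_add]; congr 1; omega

/-! ### Walks closing up with a path from the centre -/

open Classical in
/-- Pairs `(P, Q)` of a walk `P` of length `ℓ` and a member `Q` of `𝒬`, ending at the same
vertex, such that `P` belongs to the selected family `Tr` for its pair of endpoints and that pair
satisfies `B`. -/
noncomputable def pairsPQ (G : SimpleGraph V) (ℓ : ℕ) (X : Finset V) (𝒬 : Finset (ℕ → V))
    (B : V → V → Prop) (Tr : V → V → Finset (ℕ → V)) : Finset ((ℕ → V) × (ℕ → V)) :=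
  (walks G ℓ ×ˢ 𝒬).filter fun e =>
    e.1 0 ∈ X ∧ B (e.1 0) (e.2 (ℓ - 1)) ∧ e.1 ∈ Tr (e.1 0) (e.2 (ℓ - 1))

section Pairs

variable {G : SimpleGraph V} {ℓ : ℕ} {X : Finset V} {𝒬 : Finset (ℕ → V)}
  {B : V → V → Prop} {Tr : V → V → Finset (ℕ → V)} {M fN D : ℕ}

open Classical in
/-- Each `x ∈ X` and `Q ∈ 𝒬` with `B x (end Q)` lie in exactly `M` pairs `(P, Q)` with `P`
starting at `x`. -/
lemma card_pairsPQ
    (hTr : ∀ x y, B x y → (Tr x y).card = M ∧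
      ∀ P ∈ Tr x y, P ∈ walks G ℓ ∧ PathSeq G ℓ P ∧ P 0 = x ∧ P ℓ = y)
    (p : (ℕ → V) → Prop) :
    ((pairsPQ G ℓ X 𝒬 B Tr).filter fun e => p e.2).card =
      M * ((X ×ˢ 𝒬).filter fun z => B z.1 (z.2 (ℓ - 1)) ∧ p z.2).card := by
  rw [Finset.card_eq_sum_card_fiberwise (f := fun e : (ℕ → V) × (ℕ → V) => (e.1 0, e.2))
    (t := (X ×ˢ 𝒬).filter fun z => B z.1 (z.2 (ℓ - 1)) ∧ p z.2)]
  · rw [Finset.sum_const_nat (m := M), mul_comm]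
    rintro ⟨x, Q⟩ hz
    simp only [Finset.mem_filter, Finset.mem_product] at hz
    obtain ⟨⟨hx, hQ⟩, hB, hp⟩ := hz
    rw [← (hTr _ _ hB).1]
    symm
    refine Finset.card_bij (fun P _ => (P, Q)) ?_ ?_ ?_
    · intro P hP
      obtain ⟨h1, -, h2, h3⟩ := (hTr _ _ hB).2 P hP
      simp only [Finset.mem_filter, pairsPQ, Finset.mem_product]
      subst h2
      exact ⟨⟨⟨⟨h1, hQ⟩, hx, hB, hP⟩, hp⟩, rfl⟩
    · intro P _ P' _ h
      exact congrArg Prod.fst h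
    · rintro ⟨P, Q'⟩ he
      simp only [Finset.mem_filter, pairsPQ, Finset.mem_product, Prod.mk.injEq] at he
      obtain ⟨⟨⟨-, -, -, h⟩, -⟩, h0, rfl⟩ := he
      rw [h0] at h
      exact ⟨P, h, rfl⟩
  · intro e he
    simp only [Finset.coe_filter, Set.mem_ofPred_eq, pairsPQ, Finset.mem_filter,
      Finset.mem_product] at he ⊢
    exact ⟨⟨he.1.2.1, he.1.1.2⟩, he.1.2.2.1, he.2⟩

open Classical in
/-- A walk `P` lies in at most `fN` pairs `(P, Q)`, since its end determines that of `Q`. -/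
lemma card_pairsPQ_le
    (hTr : ∀ x y, B x y → (Tr x y).card = M ∧
      ∀ P ∈ Tr x y, P ∈ walks G ℓ ∧ PathSeq G ℓ P ∧ P 0 = x ∧ P ℓ = y)
    (hf : ∀ y, (𝒬.filter fun Q => Q (ℓ - 1) = y).card ≤ fN) (p : (ℕ → V) → Prop) :
    ((pairsPQ G ℓ X 𝒬 B Tr).filter fun e => p e.1).card ≤
      fN * ((walks G ℓ).filter fun P => P 0 ∈ X ∧ p P).card := by
  refine (Finset.card_le_mul_card_image (f := Prod.fst) _ fN ?_).trans
    (Nat.mul_le_mul_left _ (Finset.card_le_card ?_))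
  · intro P _
    refine le_trans ?_ (hf (P ℓ))
    refine Finset.card_le_card_of_injOn Prod.snd ?_ ?_
    · rintro ⟨P', Q⟩ he
      simp only [Finset.coe_filter, Set.mem_ofPred_eq, pairsPQ, Finset.mem_filter,
        Finset.mem_product] at he ⊢
      obtain ⟨⟨⟨⟨-, hQ⟩, -, hB, hP⟩, -⟩, rfl⟩ := he
      exact ⟨hQ, ((hTr _ _ hB).2 _ hP).2.2.2.symm⟩
    · rintro ⟨P₁, Q₁⟩ h₁ ⟨P₂, Q₂⟩ h₂ h
      simp only [Finset.coe_filter, Set.mem_ofPred_eq] at h₁ h₂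
      rw [Prod.mk.injEq]
      exact ⟨h₁.2.trans h₂.2.symm, h⟩
  · intro P hP
    obtain ⟨e, he, rfl⟩ := Finset.mem_image.1 hP
    simp only [pairsPQ, Finset.mem_filter, Finset.mem_product] at he ⊢
    exact ⟨he.1.1.1, he.1.2.1, he.2⟩

open Classical in
/-- At least `D / f` vertices `x` of `X` satisfy `B x (end Q)` for a proportion `1 / f` of all
pairs `(P, Q)`. This is Cauchy–Schwarz over `Q`: the number of pairs containing `Q` is itself
proportional to the number of `x` with `B x (end Q)`. -/
lemma many_popular {f : ℝ} (hf0 : 0 < f) (hD : 0 < D) (hℓ : 1 ≤ ℓ) (hM : 0 < M)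
    (hTr : ∀ x y, B x y → (Tr x y).card = M ∧
      ∀ P ∈ Tr x y, P ∈ walks G ℓ ∧ PathSeq G ℓ P ∧ P 0 = x ∧ P ℓ = y)
    (hX : X.card ≤ D) (hQ : 𝒬.card ≤ D ^ (ℓ - 1))
    (hB : 2 * (D : ℝ) ^ ℓ ≤ f * ((X ×ˢ 𝒬).filter fun z => B z.1 (z.2 (ℓ - 1))).card) :
    (D : ℝ) ≤ f * (X.filter fun x => ((pairsPQ G ℓ X 𝒬 B Tr).card : ℝ) ≤
      f * ((pairsPQ G ℓ X 𝒬 B Tr).filter fun e => B x (e.2 (ℓ - 1))).card).card := by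
  set E := pairsPQ G ℓ X 𝒬 B Tr with hE
  set β : ℝ := ((Finset.card ((X ×ˢ 𝒬).filter fun z => B z.1 (z.2 (ℓ - 1))) : ℕ) : ℝ) with hβ
  let d : (ℕ → V) → ℝ := fun Q => (X.filter fun x => B x (Q (ℓ - 1))).card
  have hDR : (0 : ℝ) < D := by exact_mod_cast hD
  have hEcard : (E.card : ℝ) = M * β := by
    have := card_pairsPQ (X := X) (𝒬 := 𝒬) hTr (fun _ => True)
    simp only [Finset.filter_true, and_true] at this
    rw [hE, this]; push_cast; rfl
  have hβsum : β = ∑ Q ∈ 𝒬, d Q := by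
    simp only [hβ, d, Finset.card_filter, Finset.sum_product_right]
    push_cast; rfl
  have hβpos : 0 < β := by
    have : 0 < f * β := lt_of_lt_of_le (by positivity) hB
    exact pos_of_mul_pos_right this hf0.le
  have hEpos : (0 : ℝ) < E.card := by rw [hEcard]; positivity
  -- the degrees of the members of `𝒬` enter the double count squared
  have hsum : ∑ x ∈ X, ((E.filter fun e => B x (e.2 (ℓ - 1))).card : ℝ) =
      M * ∑ Q ∈ 𝒬, d Q ^ 2 := by
    have h1 : ∀ x ∈ X, ((E.filter fun e => B x (e.2 (ℓ - 1))).card : ℝ) =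
        M * ∑ Q ∈ 𝒬, if B x (Q (ℓ - 1)) then d Q else 0 := by
      intro x _
      rw [hE, card_pairsPQ hTr (fun Q => B x (Q (ℓ - 1)))]
      push_cast
      congr 1
      rw [Finset.card_filter, Finset.sum_product_right]
      push_cast
      refine Finset.sum_congr rfl fun Q _ => ?_
      by_cases h : B x (Q (ℓ - 1))
      · simp [h, d]
      · simp [h]
    rw [Finset.sum_congr rfl h1, ← Finset.mul_sum, Finset.sum_comm]
    congr 1
    refine Finset.sum_congr rfl fun Q _ => ?_
    rw [← Finset.sum_filter, Finset.sum_const, nsmul_eq_mul, sq]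
  have hCS : β ^ 2 ≤ (D : ℝ) ^ (ℓ - 1) * ∑ Q ∈ 𝒬, d Q ^ 2 := by
    rw [hβsum]
    refine sq_sum_le_card_mul_sum_sq.trans ?_
    have : (𝒬.card : ℝ) ≤ (D : ℝ) ^ (ℓ - 1) := by exact_mod_cast hQ
    exact mul_le_mul_of_nonneg_right this (Finset.sum_nonneg fun _ _ => sq_nonneg _)
  set S := ∑ x ∈ X, ((E.filter fun e => B x (e.2 (ℓ - 1))).card : ℝ) with hS
  have hpow : (D : ℝ) ^ ℓ = D ^ (ℓ - 1) * D := by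
    rw [← pow_succ]; congr 1; omega
  have hlow : 2 * D * E.card ≤ f * S := by
    have hp : (0 : ℝ) < (D : ℝ) ^ (ℓ - 1) := by positivity
    refine le_of_mul_le_mul_left ?_ hp
    calc (D : ℝ) ^ (ℓ - 1) * (2 * D * E.card) = (2 * (D : ℝ) ^ ℓ) * (M * β) := by
          rw [hpow, hEcard]; ring
      _ ≤ (f * β) * (M * β) := mul_le_mul_of_nonneg_right hB (by positivity)
      _ = f * M * β ^ 2 := by ring
      _ ≤ f * M * ((D : ℝ) ^ (ℓ - 1) * ∑ Q ∈ 𝒬, d Q ^ 2) := by gcongr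
      _ = (D : ℝ) ^ (ℓ - 1) * (f * S) := by rw [hsum]; ring
  set X₀ := X.filter fun x => (E.card : ℝ) ≤
      f * (E.filter fun e => B x (e.2 (ℓ - 1))).card with hX₀
  have hup : f * S ≤ f * (X₀.card * E.card) + D * E.card := by
    have h1 : ∀ x ∈ X, f * ((E.filter fun e => B x (e.2 (ℓ - 1))).card : ℝ) ≤
        (if (E.card : ℝ) ≤ f * (E.filter fun e => B x (e.2 (ℓ - 1))).card
          then f * (E.card : ℝ) else 0) + E.card := by
      intro x _
      split_ifs with h
      · have : ((E.filter fun e => B x (e.2 (ℓ - 1))).card : ℝ) ≤ E.card := by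
          exact_mod_cast Finset.card_filter_le _ _
        nlinarith
      · linarith [not_le.1 h]
    rw [hS, Finset.mul_sum]
    refine (Finset.sum_le_sum h1).trans ?_
    rw [Finset.sum_add_distrib, ← Finset.sum_filter, Finset.sum_const, Finset.sum_const,
      nsmul_eq_mul, nsmul_eq_mul]
    have : (X.card : ℝ) ≤ D := by exact_mod_cast hX
    have h2 : (X.card : ℝ) * E.card ≤ D * E.card := mul_le_mul_of_nonneg_right this hEpos.le
    calc _ = f * (X₀.card * E.card) + (X.card : ℝ) * E.card := by rw [hX₀]; ring
      _ ≤ _ := by linarith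
  refine le_of_mul_le_mul_right ?_ hEpos
  linarith

open Classical in
/-- If many pairs `(P, Q)` whose walk `P` passes through `w` at index `j` have an endpoint
related to `x`, then `x` is linked to `w`: follow a link to the end of `P`, then `P` backwards. -/
lemma link_of_many {c j b : ℕ} (hjb : j + b = ℓ)
    (hdeg : ∀ u, (Finset.univ.filter fun w => G.Adj u w).card ≤ D)
    (hTr : ∀ x y, B x y → (Tr x y).card = M ∧
      ∀ P ∈ Tr x y, P ∈ walks G ℓ ∧ PathSeq G ℓ P ∧ P 0 = x ∧ P ℓ = y)
    (hf : ∀ y, (𝒬.filter fun Q => Q (ℓ - 1) = y).card ≤ fN)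
    (hBne : ∀ x y, B x y → x ≠ y)
    (hlink : ∀ x y, B x y → Link G (c + ℓ) ℓ x y) {x w : V}
    (hmany : (c + 1) * b * (fN * ((walksTo G X j w).card * D ^ (b - 1))) <
      ((pairsPQ G ℓ X 𝒬 B Tr).filter fun e => e.1 j = w ∧ B x (e.2 (ℓ - 1))).card) :
    Link G c (ℓ + b) x w := by
  intro hxw U hU hxU hwU
  set E' := (pairsPQ G ℓ X 𝒬 B Tr).filter fun e => e.1 j = w ∧ B x (e.2 (ℓ - 1)) with hE'
  obtain ⟨e, he, hav⟩ : ∃ e ∈ E', ∀ i, 0 < i → i ≤ b → e.1 (j + i) ∉ insert x U := by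
    by_contra! hcon
    have hsub : E' ⊆ (insert x U ×ˢ Finset.Icc 1 b).biUnion fun z =>
        (pairsPQ G ℓ X 𝒬 B Tr).filter fun e => e.1 j = w ∧ e.1 (j + z.2) = z.1 := by
      intro e he
      obtain ⟨i, hi, hib, hmem⟩ := hcon e he
      rw [hE', Finset.mem_filter] at he
      simp only [Finset.mem_biUnion, Finset.mem_product, Finset.mem_Icc, Finset.mem_filter]
      exact ⟨(e.1 (j + i), i), ⟨hmem, hi, hib⟩, he.1, he.2.1, rfl⟩
    have h1 := (Finset.card_le_card hsub).trans (Finset.card_biUnion_le_card_mul _ _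
      (fN * ((walksTo G X j w).card * D ^ (b - 1))) fun z hz => by
        simp only [Finset.mem_product, Finset.mem_Icc] at hz
        have h1 := card_pairsPQ_le (X := X) hTr hf (fun P => P j = w ∧ P (j + z.2) = z.1)
        have h2 := card_walks_hit hdeg X hjb hz.2.1 hz.2.2 w z.1
        refine (le_of_eq (by congr)).trans (h1.trans (Nat.mul_le_mul_left _
          ((le_of_eq (by congr)).trans h2))))
    rw [Finset.card_product, Nat.card_Icc, Nat.add_sub_cancel] at h1
    have h2 : (insert x U).card ≤ c + 1 := (Finset.card_insert_le _ _).trans (by omega)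
    exact absurd (h1.trans (Nat.mul_le_mul_right _ (Nat.mul_le_mul_right _ h2)))
      (not_le.2 hmany)
  obtain ⟨P, Q⟩ := e
  simp only [hE', pairsPQ, Finset.mem_filter, Finset.mem_product] at he hav
  obtain ⟨⟨-, -, hB', hP⟩, hw, hB⟩ := he
  obtain ⟨-, hpath, -, hend⟩ := (hTr _ _ hB').2 P hP
  -- the tail of `P`, read from its end `y` back to `w`
  have hR := pathSeq_rev (pathSeq_drop (j := j) hpath)
  rw [show ℓ - j = b by omega] at hR
  set R := seqRev b (seqDrop j P) with hRdef
  have hRi : ∀ i, R i = P (j + (b - i)) := fun i => rfl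
  have hR0 : R 0 = Q (ℓ - 1) := by rw [hRi, ← hend]; congr 1
  have hRb : R b = w := by rw [hRi, ← hw]; congr 1; omega
  have hRav : ∀ i, i ≤ b → R i ≠ x ∧ R i ∉ U := by
    intro i hi
    rcases Nat.lt_or_ge i b with h | h
    · have := hav (b - i) (by omega) (by omega)
      rw [← hRi, Finset.mem_insert, not_or] at this
      exact this
    · rw [show i = b by omega, hRb]; exact ⟨Ne.symm hxw, hwU⟩
  obtain ⟨p, hp, hp0, hpl, hpav⟩ := hlink x _ hB (hBne _ _ hB) (U ∪ (Finset.Icc 1 b).image R)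
    (by
      have h3 := Finset.card_union_le U ((Finset.Icc 1 b).image R)
      have h4 : ((Finset.Icc 1 b).image R).card ≤ b := by
        simpa using Finset.card_image_le (s := Finset.Icc 1 b) (f := R)
      omega)
    (by
      simp only [Finset.mem_union, Finset.mem_image, Finset.mem_Icc, not_or, not_exists, not_and]
      exact ⟨hxU, fun i hi => (hRav i hi.2).1⟩)
    (by
      simp only [Finset.mem_union, Finset.mem_image, Finset.mem_Icc, not_or, not_exists, not_and]
      rw [← hR0]
      exact ⟨(hRav 0 (by omega)).2, fun i hi h => hR.2 0 i hi.1 hi.2 h.symm⟩)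
  have hpav' : ∀ i, i ≤ ℓ → p i ∉ U ∧ ∀ a, 1 ≤ a → a ≤ b → p i ≠ R a := by
    intro i hi
    have := hpav i hi
    simp only [Finset.mem_union, Finset.mem_image, Finset.mem_Icc, not_or, not_exists,
      not_and] at this
    exact ⟨this.1, fun a h1 h2 h => this.2 a ⟨h1, h2⟩ h.symm⟩
  refine ⟨seqCat ℓ p R, pathSeq_cat hp hR (hpl.trans hR0.symm) ?_, by simp [seqCat, hp0], ?_, ?_⟩
  · intro i a hi ha h
    rcases Nat.eq_zero_or_pos a with rfl | ha0
    · exact hp.2 i ℓ hi le_rfl (h.trans (hR0.trans hpl.symm))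
    · exact (hpav' i hi.le).2 a ha0 ha h
  · by_cases h : b = 0
    · subst h
      simp [seqCat, hpl, ← hR0, hRb]
    · simp [seqCat, h, hRb]
  · intro i hi
    by_cases h : i ≤ ℓ
    · simpa [seqCat, h] using (hpav' i h).1
    · simpa [seqCat, h] using (hRav (i - ℓ) (by omega)).2

open Classical in
/-- For a popular `x`, the vertices `w` linked to `x` by paths of length `ℓ + b` carry a proportion
`1 / (2 f)` of the pairs `(P, Q)`, where `w` carries the pairs with `P j = w`. This remains true
after discarding at most `g` vertices `w`. -/
lemma linked_weight {f : ℝ} {c g j b : ℕ} (hjb : j + b = ℓ) (hℓ : 1 ≤ ℓ) (hf0 : 0 < f)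
    (hfN : (fN : ℝ) ≤ f)
    (hdeg : ∀ u, (Finset.univ.filter fun w => G.Adj u w).card ≤ D)
    (hX : X.card ≤ D)
    (hTr : ∀ x y, B x y → (Tr x y).card = M ∧
      ∀ P ∈ Tr x y, P ∈ walks G ℓ ∧ PathSeq G ℓ P ∧ P 0 = x ∧ P ℓ = y)
    (hf : ∀ y, (𝒬.filter fun Q => Q (ℓ - 1) = y).card ≤ fN)
    (hBne : ∀ x y, B x y → x ≠ y)
    (hlink : ∀ x y, B x y → Link G (c + ℓ) ℓ x y)
    (hbig : 2 * f * (((g + (c + 1) * ℓ : ℕ) : ℝ) * f * (D : ℝ) ^ ℓ) ≤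
      (pairsPQ G ℓ X 𝒬 B Tr).card) {x : V}
    (hx : ((pairsPQ G ℓ X 𝒬 B Tr).card : ℝ) ≤
      f * ((pairsPQ G ℓ X 𝒬 B Tr).filter fun e => B x (e.2 (ℓ - 1))).card)
    (U : Finset V) (hU : U.card ≤ g) :
    ((pairsPQ G ℓ X 𝒬 B Tr).card : ℝ) ≤
      2 * f * ∑ w ∈ Finset.univ.filter (fun w => w ∉ U ∧ Link G c (ℓ + b) x w),
        (((pairsPQ G ℓ X 𝒬 B Tr).filter fun e => e.1 j = w).card : ℝ) := by
  set E := pairsPQ G ℓ X 𝒬 B Tr with hE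
  let e : V → ℕ := fun w => (E.filter fun e => e.1 j = w).card
  let τ : V → ℕ := fun w => (c + 1) * b * (fN * ((walksTo G X j w).card * D ^ (b - 1)))
  have hfib : (E.filter fun e => B x (e.2 (ℓ - 1))).card =
      ∑ w, (E.filter fun e => e.1 j = w ∧ B x (e.2 (ℓ - 1))).card := by
    rw [Finset.card_eq_sum_card_fiberwise (f := fun e : (ℕ → V) × (ℕ → V) => e.1 j)
      (t := Finset.univ) (by simp [Set.MapsTo])]
    refine Finset.sum_congr rfl fun w _ => ?_
    rw [Finset.filter_filter]
    congr 1
    exact Finset.filter_congr fun _ _ => and_comm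
  have hterm : ∀ w, (E.filter fun e => e.1 j = w ∧ B x (e.2 (ℓ - 1))).card ≤
      (if w ∉ U ∧ Link G c (ℓ + b) x w then e w else 0) +
        ((if w ∈ U then fN * D ^ ℓ else 0) + τ w) := by
    intro w
    have hle : (E.filter fun e => e.1 j = w ∧ B x (e.2 (ℓ - 1))).card ≤ e w :=
      Finset.card_le_card fun z hz => by
        rw [Finset.mem_filter] at hz ⊢; exact ⟨hz.1, hz.2.1⟩
    by_cases hwU : w ∈ U
    · have h1 := card_pairsPQ_le (X := X) hTr hf (fun P => P j = w)
      have h2 := card_walks_through hdeg X hjb w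
      have : e w ≤ fN * D ^ ℓ := (le_of_eq (by simp only [e, hE]; congr)).trans
        (h1.trans (Nat.mul_le_mul_left _ ((le_of_eq (by congr)).trans h2)))
      simp only [hwU, not_true_eq_false, false_and, if_false, if_true]
      omega
    · by_cases hl : Link G c (ℓ + b) x w
      · simp only [hwU, hl, not_false_eq_true, and_self, if_true, if_false]
        omega
      · have : (E.filter fun e => e.1 j = w ∧ B x (e.2 (ℓ - 1))).card ≤ τ w := by
          by_contra hcon
          exact hl (link_of_many hjb hdeg hTr hf hBne hlink (not_le.1 hcon))
        simp only [hwU, hl, and_false, if_false]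
        omega
  have hτ : ∑ w, τ w ≤ (c + 1) * ℓ * (fN * D ^ ℓ) := by
    rcases Nat.eq_zero_or_pos b with hb | hb
    · simp [τ, hb]
    · have hs := sum_walksTo hdeg X j
      calc ∑ w, τ w = (c + 1) * b * (fN * ((∑ w, (walksTo G X j w).card) * D ^ (b - 1))) := by
            simp only [τ, Finset.mul_sum, Finset.sum_mul]
        _ ≤ (c + 1) * ℓ * (fN * ((D * D ^ j) * D ^ (b - 1))) := by
            gcongr
            · omega
            · exact hs.trans (Nat.mul_le_mul_right _ hX)
        _ = (c + 1) * ℓ * (fN * D ^ ℓ) := by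
            rw [← pow_succ', ← pow_add, show j + 1 + (b - 1) = ℓ by omega]
  have htot : (E.filter fun e => B x (e.2 (ℓ - 1))).card ≤
      ∑ w ∈ Finset.univ.filter (fun w => w ∉ U ∧ Link G c (ℓ + b) x w), e w +
        (g + (c + 1) * ℓ) * (fN * D ^ ℓ) := by
    rw [hfib]
    refine (Finset.sum_le_sum fun w _ => hterm w).trans ?_
    rw [Finset.sum_add_distrib, Finset.sum_add_distrib, ← Finset.sum_filter,
      Finset.sum_ite_mem, Finset.univ_inter, Finset.sum_const, smul_eq_mul, Nat.add_mul]
    have := Nat.mul_le_mul_right (fN * D ^ ℓ) hU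
    omega
  have htotR : ((E.filter fun e => B x (e.2 (ℓ - 1))).card : ℝ) ≤
      ∑ w ∈ Finset.univ.filter (fun w => w ∉ U ∧ Link G c (ℓ + b) x w), (e w : ℝ) +
        ((g + (c + 1) * ℓ : ℕ) : ℝ) * (fN * (D : ℝ) ^ ℓ) := by
    exact_mod_cast htot
  have hfN' : ((g + (c + 1) * ℓ : ℕ) : ℝ) * (fN * (D : ℝ) ^ ℓ) ≤
      ((g + (c + 1) * ℓ : ℕ) : ℝ) * f * (D : ℝ) ^ ℓ := by
    rw [mul_assoc]; gcongr
  have h3 := mul_le_mul_of_nonneg_left (htotR.trans (add_le_add_right hfN' _)) hf0.le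
  change (E.card : ℝ) ≤ 2 * f * ∑ w ∈ Finset.univ.filter
    (fun w => w ∉ U ∧ Link G c (ℓ + b) x w), (e w : ℝ)
  rw [mul_add] at h3
  linarith

end Pairs

/-! ### Finding a complete bipartite pattern -/

open Classical in
/-- Weighted averaging: some vertex outside `U` is related to a proportion `1/θ` of `X₀`. -/
lemma exists_pick {X₀ U : Finset V} (hX₀ : X₀.Nonempty) {r : V → V → Prop} {e : V → ℝ}
    {T θ : ℝ} (he : ∀ w, 0 ≤ e w) (hT : 0 < T) (hsum : ∑ w, e w ≤ T) (hθ : 0 < θ)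
    (h : ∀ x ∈ X₀, T ≤ θ * ∑ w ∈ Finset.univ.filter (fun w => w ∉ U ∧ r x w), e w) :
    ∃ w, w ∉ U ∧ (X₀.card : ℝ) ≤ θ * (X₀.filter fun x => r x w).card := by
  by_contra! hcon
  have h1 : (X₀.card : ℝ) * T ≤
      θ * ∑ w ∈ Finset.univ.filter (fun w => w ∉ U), e w * (X₀.filter fun x => r x w).card := by
    calc (X₀.card : ℝ) * T = ∑ x ∈ X₀, T := by simp
      _ ≤ ∑ x ∈ X₀, θ * ∑ w ∈ Finset.univ.filter (fun w => w ∉ U ∧ r x w), e w :=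
        Finset.sum_le_sum h
      _ = _ := by
        rw [← Finset.mul_sum]
        congr 1
        have : ∀ x ∈ X₀, ∑ w ∈ Finset.univ.filter (fun w => w ∉ U ∧ r x w), e w =
            ∑ w ∈ Finset.univ.filter (fun w => w ∉ U), if r x w then e w else 0 := by
          intro x _
          rw [← Finset.sum_filter, Finset.filter_filter]
        rw [Finset.sum_congr rfl this, Finset.sum_comm]
        refine Finset.sum_congr rfl fun w _ => ?_
        rw [← Finset.sum_filter, Finset.sum_const, nsmul_eq_mul, mul_comm]
  have hle : ∑ w ∈ Finset.univ.filter (fun w => w ∉ U), e w ≤ T :=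
    (Finset.sum_le_sum_of_subset_of_nonneg (Finset.filter_subset _ _)
      fun w _ _ => he w).trans hsum
  have hXpos : (0 : ℝ) < X₀.card := by exact_mod_cast hX₀.card_pos
  have hpos : ∃ w ∈ Finset.univ.filter (fun w => w ∉ U), 0 < e w := by
    by_contra! h0
    have : ∑ w ∈ Finset.univ.filter (fun w => w ∉ U),
        e w * (X₀.filter fun x => r x w).card ≤ 0 :=
      Finset.sum_nonpos fun w hw =>
        mul_nonpos_of_nonpos_of_nonneg (h0 w hw) (Nat.cast_nonneg _)
    nlinarith [mul_pos hXpos hT]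
  have h2 : θ * ∑ w ∈ Finset.univ.filter (fun w => w ∉ U),
      e w * (X₀.filter fun x => r x w).card <
      ∑ w ∈ Finset.univ.filter (fun w => w ∉ U), e w * X₀.card := by
    rw [Finset.mul_sum]
    refine Finset.sum_lt_sum (fun w hw => ?_) ?_
    · have := (hcon w (Finset.mem_filter.1 hw).2).le
      nlinarith [mul_le_mul_of_nonneg_left this (he w)]
    · obtain ⟨w, hw, hw0⟩ := hpos
      refine ⟨w, hw, ?_⟩
      have := hcon w (Finset.mem_filter.1 hw).2
      nlinarith [mul_lt_mul_of_pos_left this hw0]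
  rw [← Finset.sum_mul] at h2
  nlinarith [mul_le_mul_of_nonneg_right hle hXpos.le]

open Classical in
/-- Picking `g'` distinct vertices `w` one after the other leaves a proportion `θ ^ (-g')` of `X₀`
that is related to all of them. -/
lemma exists_many {X₀ : Finset V} (hX₀ : X₀.Nonempty) {r : V → V → Prop} {e : V → ℝ}
    {T θ : ℝ} {g : ℕ} (he : ∀ w, 0 ≤ e w) (hT : 0 < T) (hsum : ∑ w, e w ≤ T) (hθ : 0 < θ)
    (h : ∀ x ∈ X₀, ∀ U : Finset V, U.card ≤ g →
      T ≤ θ * ∑ w ∈ Finset.univ.filter (fun w => w ∉ U ∧ r x w), e w) :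
    ∀ g', g' ≤ g → ∃ W X₁ : Finset V, W.card = g' ∧ X₁ ⊆ X₀ ∧
      (X₀.card : ℝ) ≤ θ ^ g' * X₁.card ∧ ∀ x ∈ X₁, ∀ w ∈ W, r x w := by
  intro g'
  induction g' with
  | zero => exact fun _ => ⟨∅, X₀, rfl, subset_rfl, by simp, by simp⟩
  | succ g' ih =>
    intro hg
    obtain ⟨W, X₁, hW, hsub, hcard, hr⟩ := ih (by omega)
    have hX₁ : X₁.Nonempty := by
      rw [Finset.nonempty_iff_ne_empty]
      rintro rfl
      have : (0 : ℝ) < X₀.card := by exact_mod_cast hX₀.card_pos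
      simp only [Finset.card_empty, Nat.cast_zero, mul_zero] at hcard
      linarith
    obtain ⟨w, hwW, hw⟩ := exists_pick (U := W) hX₁ he hT hsum hθ
      (fun x hx => h x (hsub hx) W (by omega))
    refine ⟨insert w W, X₁.filter fun x => r x w, by rw [Finset.card_insert_of_notMem hwW, hW],
      (Finset.filter_subset _ _).trans hsub, ?_, ?_⟩
    · calc (X₀.card : ℝ) ≤ θ ^ g' * X₁.card := hcard
        _ ≤ θ ^ g' * (θ * (X₁.filter fun x => r x w).card) := by gcongr
        _ = _ := by ring
    · intro x hx w' hw'
      rw [Finset.mem_filter] at hx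
      rcases Finset.mem_insert.1 hw' with rfl | h'
      · exact hx.2
      · exact hr x hx.1 w' h'

/-! ### Bad pairs around a vertex -/

open Classical in
/-- The good paths of length `m` that start at `v`. -/
noncomputable def goodFrom (G : SimpleGraph V) (L : ℝ) (m : ℕ) (v : V) : Finset (ℕ → V) :=
  (walks G m).filter fun Q => Q 0 = v ∧ Good G L m Q

open Classical in
lemma card_goodFrom_fiber {G : SimpleGraph V} {L : ℝ} {m : ℕ} (v y : V) :
    ((goodFrom G L m v).filter fun Q => Q m = y).card ≤ ⌊fBound m L⌋₊ := by
  rcases ((goodFrom G L m v).filter fun Q => Q m = y).eq_empty_or_nonempty with h | ⟨Q, hQ⟩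
  · rw [h]; simp
  · simp only [goodFrom, Finset.mem_filter] at hQ
    obtain ⟨⟨-, rfl, hgood⟩, rfl⟩ := hQ
    refine Nat.le_floor ((Nat.cast_le.2 (Finset.card_le_card fun R hR => ?_)).trans
      (good_iff_card.1 hgood).2)
    simp only [goodFrom, Finset.mem_filter] at hR
    exact mem_admSet.2 ⟨hR.1.2.1, hR.2, (mem_walks.1 hR.1.1).1, (good_iff_card.1 hR.1.2.2).1⟩

open Classical in
/-- A path `v₀ v v₂ … v_ℓ` that is admissible but not good is encoded by `v₀` and the good path
`v v₂ … v_ℓ`. -/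
lemma ncard_le_bad {G : SimpleGraph V} {L : ℝ} {ℓ : ℕ} (hℓ : 2 ≤ ℓ) (v : V) :
    Set.ncard {q : ℕ → V | PadSeq ℓ q ∧ q 1 = v ∧ Admissible G L ℓ q ∧ ¬ Good G L ℓ q} ≤
      (((Finset.univ.filter fun w => G.Adj v w) ×ˢ goodFrom G L (ℓ - 1) v).filter
        fun z => Bad G L ℓ z.1 (z.2 (ℓ - 1))).card := by
  rw [← Set.ncard_coe_finset]
  refine Set.ncard_le_ncard_of_injOn (fun q => (q 0, seqDrop 1 q)) ?_ ?_ (Finset.finite_toSet _)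
  · rintro q ⟨hpad, rfl, hadm, hng⟩
    have hgood := hadm.good_drop (i := 1) one_pos (by omega)
    have hw : q ∈ walks G ℓ := mem_walks.2 ⟨hpad, hadm.1.1⟩
    simp only [Finset.coe_filter, Finset.mem_product, Finset.mem_filter, Finset.mem_univ,
      true_and, Set.mem_ofPred_eq, goodFrom]
    refine ⟨⟨(hadm.1.1 0 (by omega)).symm, drop_mem_walks (by omega) hw, rfl, hgood⟩,
      q, rfl, ?_, hadm, hng⟩
    simp [seqDrop, show 1 + (ℓ - 1) = ℓ by omega]
  · intro p _ q _ h
    simp only [Prod.mk.injEq] at h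
    funext a
    rcases Nat.eq_zero_or_pos a with rfl | ha
    · exact h.1
    · simpa [seqDrop, show 1 + (a - 1) = a by omega] using congrFun h.2 (a - 1)

open Classical in
/-- The vertices of a bad pair are joined by more than `f(ℓ, L)` admissible paths. Selecting the
same number `⌈f(ℓ, L)⌉` of them for every bad pair makes the later double counts uniform. -/
lemma exists_selection (G : SimpleGraph V) (L : ℝ) (ℓ : ℕ) :
    ∃ Tr : V → V → Finset (ℕ → V), ∀ x y, Bad G L ℓ x y →
      (Tr x y).card = ⌈fBound ℓ L⌉₊ ∧
      ∀ P ∈ Tr x y, P ∈ walks G ℓ ∧ PathSeq G ℓ P ∧ P 0 = x ∧ P ℓ = y := by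
  have : ∀ x y, ∃ T : Finset (ℕ → V), Bad G L ℓ x y → T.card = ⌈fBound ℓ L⌉₊ ∧
      ∀ P ∈ T, P ∈ walks G ℓ ∧ PathSeq G ℓ P ∧ P 0 = x ∧ P ℓ = y := by
    intro x y
    by_cases h : Bad G L ℓ x y
    · obtain ⟨T, hT, hc⟩ := Finset.exists_subset_card_eq (Nat.ceil_le.2 h.lt_card.le)
      refine ⟨T, fun _ => ⟨hc, fun P hP => ?_⟩⟩
      obtain ⟨h0, hl, hpad, hadm⟩ := mem_admSet.1 (hT hP)
      exact ⟨mem_walks.2 ⟨hpad, hadm.1.1⟩, hadm.1, h0, hl⟩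
    · exact ⟨∅, fun h' => absurd h' h⟩
  choose Tr hTr using this
  exact ⟨Tr, hTr⟩

open Classical in
/-- If too many admissible paths with second vertex `v` fail to be good, then there is a large set
of vertices that are pairwise robustly linked by paths of length `2k`. -/
lemma exists_linked_set {G : SimpleGraph V} {L : ℝ} {k ℓ h g D : ℕ} {v : V} (hℓ : 2 ≤ ℓ)
    (hℓk : ℓ ≤ k) (hL : 1 ≤ L) (hg : g = h + (k + 1) * (2 * k + 1) + 3)
    (hs : ((g + k : ℕ) : ℝ) ^ 2 ≤ fBound (ℓ - 1) L) (hD0 : 0 < D)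
    (hdeg : ∀ u, (Finset.univ.filter fun w => G.Adj u w).card ≤ D)
    (hmany : 2 * (D : ℝ) ^ ℓ / fBound (ℓ - 1) L <
      Set.ncard {q : ℕ → V | PadSeq ℓ q ∧ q 1 = v ∧ Admissible G L ℓ q ∧ ¬ Good G L ℓ q})
    (hlarge : fBound (ℓ - 1) L ^ (4 * g + 2) ≤ D) :
    ∃ X : Finset V, g ≤ X.card ∧ ∀ x ∈ X, ∀ y ∈ X, Link G h (2 * k) x y := by
  obtain ⟨c, hc⟩ : ∃ c, c = h + (k + 1) * (2 * k + 1) := ⟨_, rfl⟩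
  have hgc : g = c + 3 := by omega
  set f := fBound (ℓ - 1) L with hf
  have hf5 : fBound ℓ L = f ^ 5 := by
    rw [hf, fBound, fBound, ← pow_mul, ← pow_succ]; congr 2; omega
  have hgk : (3 : ℝ) ≤ ((g + k : ℕ) : ℝ) := by exact_mod_cast (by omega : 3 ≤ g + k)
  have hf3 : (3 : ℝ) ≤ f := by nlinarith
  have hf0 : (0 : ℝ) < f := by linarith
  have hf1 : (1 : ℝ) ≤ f := by linarith
  have hnat : ∀ a : ℕ, a ≤ (g + k) ^ 2 → (a : ℝ) ≤ f := fun a ha =>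
    le_trans (by exact_mod_cast ha) hs
  have hDR : (0 : ℝ) < D := by exact_mod_cast hD0
  obtain ⟨Tr, hTr⟩ := exists_selection G L ℓ
  set M := ⌈fBound ℓ L⌉₊ with hM
  have hMf : f ^ 5 ≤ (M : ℝ) := by rw [← hf5]; exact Nat.le_ceil _
  have hM0 : 0 < M := by
    have : (0 : ℝ) < M := lt_of_lt_of_le (by positivity) hMf
    exact_mod_cast this
  set X := Finset.univ.filter fun w => G.Adj v w with hXdef
  have hX : X.card ≤ D := hdeg v
  set 𝒬 := goodFrom G L (ℓ - 1) v with h𝒬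
  have hQ : 𝒬.card ≤ D ^ (ℓ - 1) := by
    refine le_trans (Finset.card_le_card fun Q hQ => ?_) (card_walks_from hdeg (ℓ - 1) v)
    simp only [h𝒬, goodFrom, Finset.mem_filter] at hQ ⊢
    exact ⟨hQ.1, hQ.2.1⟩
  have hfib := fun y => card_goodFrom_fiber (G := G) (L := L) (m := ℓ - 1) v y
  have hfN : ((⌊fBound (ℓ - 1) L⌋₊ : ℕ) : ℝ) ≤ f := Nat.floor_le hf0.le
  have hB : 2 * (D : ℝ) ^ ℓ ≤
      f * ((X ×ˢ 𝒬).filter fun z => Bad G L ℓ z.1 (z.2 (ℓ - 1))).card := by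
    have h1 := hmany.trans_le (Nat.cast_le.2 (ncard_le_bad hℓ v))
    rw [div_lt_iff₀ hf0] at h1
    rw [mul_comm f]
    exact h1.le
  have hBne : ∀ x y, Bad G L ℓ x y → x ≠ y := fun x y hb => hb.ne (by omega)
  have hlink : ∀ x y, Bad G L ℓ x y → Link G (c + ℓ) ℓ x y := by
    intro x y hb
    refine hb.link hL ?_
    rw [← hf, hf5]
    have h1 : (((c + ℓ) * ℓ : ℕ) : ℝ) ≤ f := hnat _ (by
      rw [sq]; exact Nat.mul_le_mul (by omega) (by omega))
    push_cast at h1 ⊢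
    calc ((c : ℝ) + ℓ) * ℓ * f ^ 2 ≤ f * f ^ 2 := by gcongr
      _ = f ^ 3 := by ring
      _ ≤ f ^ 5 := pow_le_pow_right₀ hf1 (by norm_num)
  set E := pairsPQ G ℓ X 𝒬 (Bad G L ℓ) Tr with hE
  have hEcard : 2 * f ^ 4 * (D : ℝ) ^ ℓ ≤ E.card := by
    have h1 := card_pairsPQ (X := X) (𝒬 := 𝒬) hTr (fun _ => True)
    simp only [Finset.filter_true, and_true] at h1
    rw [hE, h1]
    push_cast
    calc 2 * f ^ 4 * (D : ℝ) ^ ℓ = f ^ 4 * (2 * (D : ℝ) ^ ℓ) := by ring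
      _ ≤ f ^ 4 * (f * _) := mul_le_mul_of_nonneg_left hB (by positivity)
      _ = f ^ 5 * _ := by ring
      _ ≤ _ := mul_le_mul_of_nonneg_right hMf (Nat.cast_nonneg _)
  have hE0 : (0 : ℝ) < E.card := lt_of_lt_of_le (by positivity) hEcard
  have hbig : 2 * f * (((g + (c + 1) * ℓ : ℕ) : ℝ) * f * (D : ℝ) ^ ℓ) ≤ E.card := by
    refine le_trans ?_ hEcard
    have h1 : ((g + (c + 1) * ℓ : ℕ) : ℝ) ≤ f := hnat _ (by
      subst hgc
      have : (c + 1) * ℓ ≤ (c + 1) * k := Nat.mul_le_mul_left _ hℓk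
      nlinarith)
    calc _ ≤ 2 * f * (f * f * (D : ℝ) ^ ℓ) := by gcongr
      _ = 2 * f ^ 3 * (D : ℝ) ^ ℓ := by ring
      _ ≤ _ := by gcongr; norm_num
  have hpop := many_popular hf0 hD0 (by omega) hM0 hTr hX hQ hB
  rw [← hE] at hpop
  set X₀ := X.filter fun x => (E.card : ℝ) ≤
      f * (E.filter fun e => Bad G L ℓ x (e.2 (ℓ - 1))).card with hX₀
  have hne : ∀ {Y : Finset V} {r : ℝ}, (D : ℝ) ≤ r * Y.card → Y.Nonempty := by
    intro Y r hY
    rw [Finset.nonempty_iff_ne_empty]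
    rintro rfl
    simp only [Finset.card_empty, Nat.cast_zero, mul_zero] at hY
    linarith
  have hsum : ∀ j, ∑ w, ((E.filter fun e => e.1 j = w).card : ℝ) ≤ E.card := by
    intro j
    have := Finset.card_eq_sum_card_fiberwise (f := fun e : (ℕ → V) × (ℕ → V) => e.1 j)
      (s := E) (t := Finset.univ) (by simp [Set.MapsTo])
    rw [this]; push_cast; rfl
  have hweight : ∀ j b, j + b = ℓ → ∀ x ∈ X₀, ∀ U : Finset V, U.card ≤ g →
      (E.card : ℝ) ≤ 2 * f * ∑ w ∈ Finset.univ.filter (fun w => w ∉ U ∧ Link G c (ℓ + b) x w),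
        ((E.filter fun e => e.1 j = w).card : ℝ) := by
    intro j b hjb x hx U hU
    exact linked_weight hjb (by omega) hf0 hfN hdeg hX hTr hfib hBne hlink hbig
      (Finset.mem_filter.1 hx).2 U hU
  -- write `k = ℓ a + b`; links of length `ℓ + b` end at index `ℓ - b` of the walks `P`,
  -- links of length `ℓ` at their last vertex
  have hb : k % ℓ < ℓ := Nat.mod_lt _ (by omega)
  obtain ⟨W, X₁, hW, hsub₁, hcard₁, hr₁⟩ := exists_many (hne hpop) (fun w => Nat.cast_nonneg _)
    hE0 (hsum (ℓ - k % ℓ)) (by positivity : 0 < 2 * f) (hweight (ℓ - k % ℓ) (k % ℓ) (by omega))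
    g le_rfl
  have hD₁ : (D : ℝ) ≤ f * (2 * f) ^ g * X₁.card := by
    calc (D : ℝ) ≤ f * X₀.card := hpop
      _ ≤ f * ((2 * f) ^ g * X₁.card) := by gcongr
      _ = _ := by ring
  obtain ⟨W₀, X₂, hW₀, hsub₂, hcard₂, hr₂⟩ := exists_many (hne hD₁) (fun w => Nat.cast_nonneg _)
    hE0 (hsum ℓ) (by positivity : 0 < 2 * f)
    (fun x hx => hweight ℓ 0 (by omega) x (hsub₁ hx)) g le_rfl
  have hgX : g ≤ X₂.card := by
    by_contra! hlt
    have hXf : (X₂.card : ℝ) < f :=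
      lt_of_lt_of_le (by exact_mod_cast hlt) (hnat g (by nlinarith))
    have h1 : (D : ℝ) < f ^ (4 * g + 2) := by
      calc (D : ℝ) ≤ f * (2 * f) ^ g * X₁.card := hD₁
        _ ≤ f * (2 * f) ^ g * ((2 * f) ^ g * X₂.card) := by gcongr
        _ < f * (2 * f) ^ g * ((2 * f) ^ g * f) := by gcongr
        _ ≤ f * (f * f) ^ g * ((f * f) ^ g * f) := by gcongr <;> linarith
        _ = f ^ (4 * g + 2) := by ring
    linarith
  refine ⟨X₂, hgX, link_all (a := k / ℓ) (b := k % ℓ) X₂ W₀ W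
    (Nat.div_pos hℓk (by omega)) (by omega) (Nat.div_add_mod k ℓ) (hg ▸ hgX)
    (by omega) (by omega) ?_ ?_⟩
  · rw [← hc]; exact hr₂
  · rw [← hc]; exact fun x hx => hr₁ x (hsub₂ hx)

/-! ### Degrees and exponents -/

lemma card_adj_le_maxDeg (G : SimpleGraph V) [DecidableRel G.Adj] (u : V) :
    (Finset.univ.filter fun w => G.Adj u w).card ≤ maxDeg G := by
  have hfin : {d | ∃ v, (G.neighborSet v).ncard = d}.Finite :=
    Set.finite_range fun v => (G.neighborSet v).ncard
  refine le_csSup hfin.bddAbove ⟨u, ?_⟩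
  rw [← Set.ncard_coe_finset]
  congr 1
  ext w
  simp

/-- The assumed lower bound on the minimum degree exceeds `f(ℓ - 1, L) ^ (4 g + 2)`, the total
loss in the choice of the linked set. -/
lemma exponent_le {k ℓ h : ℕ} (hℓk : ℓ ≤ k) (hk : 2 ≤ k) (hh : 1 ≤ h) :
    5 ^ (ℓ - 1) * (4 * (h + (k + 1) * (2 * k + 1) + 3) + 2) ≤ 100 ^ k * h := by
  have h1 : k ^ 2 ≤ 4 ^ k := by
    have := (Nat.lt_two_pow_self (n := k)).le
    calc k ^ 2 ≤ (2 ^ k) ^ 2 := Nat.pow_le_pow_left this 2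
      _ = 4 ^ k := by rw [← pow_mul, mul_comm, pow_mul]; norm_num
  have h2 : 25 ≤ 5 ^ k := by
    calc 25 = 5 ^ 2 := by norm_num
      _ ≤ 5 ^ k := Nat.pow_le_pow_right (by norm_num) hk
  have h3 : 4 * (h + (k + 1) * (2 * k + 1) + 3) + 2 ≤ 20 ^ k * h := by
    have h4 : (20 : ℕ) ^ k = 5 ^ k * 4 ^ k := by rw [← mul_pow]; norm_num
    have h5 : 25 * k ^ 2 ≤ 20 ^ k := by rw [h4]; exact Nat.mul_le_mul h2 h1
    have h6 : 25 * k ^ 2 * h ≤ 20 ^ k * h := Nat.mul_le_mul_right _ h5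
    refine le_trans ?_ h6
    obtain ⟨h', rfl⟩ := Nat.exists_eq_add_of_le hh
    obtain ⟨k', rfl⟩ := Nat.exists_eq_add_of_le hk
    nlinarith [Nat.zero_le (k' * h'), Nat.zero_le (k' ^ 2 * h')]
  calc _ ≤ 5 ^ k * (20 ^ k * h) :=
        Nat.mul_le_mul (Nat.pow_le_pow_right (by norm_num) (by omega)) h3
    _ = 100 ^ k * h := by rw [← mul_assoc, ← mul_pow]; norm_num

/-! ### The main estimate -/

/-- **Lemma 3.4.** With `H = F^{2k-1}`: there is `L0` such that for `L ≥ L0`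
and `n` large, if `G` is an `H`-free `K`-almost-regular graph on `n` vertices with minimum
degree `δ ≥ L^{100^k·|V(H)|}`, then for every `2 ≤ ℓ ≤ k` and every vertex `v`, the number
of `L`-admissible but not `L`-good paths of length `ℓ` whose second vertex is `v` is at
most `2(Kδ)^ℓ / f(ℓ-1, L)`. -/
theorem count_admissible_not_good_paths_through_v
    (t : ℕ) (m : Fin t → Fin t → ℕ)
    (hsymm : ∀ a b, m a b = m b a) (hirr : ∀ a, m a a = 0)
    (k K : ℕ) (hk : 1 ≤ k) (hK : 1 ≤ K) :
    ∃ (L0 : ℝ) (n0 : ℕ), 1 < L0 ∧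
      ∀ n : ℕ, n0 ≤ n → ∀ L : ℝ, L0 ≤ L → ∀ G : SimpleGraph (Fin n),
        ¬ ContainsMultiSubdiv G t m (2 * k) →
        maxDeg G ≤ K * minDeg G →
        L ^ (100 ^ k * nH t k m) ≤ (minDeg G : ℝ) →
        ∀ ℓ : ℕ, 2 ≤ ℓ → ℓ ≤ k → ∀ v : Fin n,
          (Set.ncard {q : ℕ → Fin n | PadSeq ℓ q ∧ q 1 = v ∧
              Admissible G L ℓ q ∧ ¬ Good G L ℓ q} : ℝ) ≤
            2 * ((K : ℝ) * (minDeg G : ℝ)) ^ ℓ / fBound (ℓ - 1) L := by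
  -- `L0` makes `f(ℓ - 1, L) ≥ L` exceed the quadratic expressions in `g`, `k` that occur below;
  -- no lower bound on `n` is needed beyond the one implied by the minimum degree
  obtain ⟨g, hg⟩ : ∃ g, g = nH t k m + (k + 1) * (2 * k + 1) + 3 := ⟨_, rfl⟩
  refine ⟨((g + k : ℕ) : ℝ) ^ 2, 0, ?_, ?_⟩
  · exact_mod_cast Nat.one_lt_pow two_ne_zero (by omega : 1 < g + k)
  intro n _ L hL G hfree hreg hmin ℓ hℓ hℓk v
  by_contra! hcon
  rcases Nat.eq_zero_or_pos t with rfl | ht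
  · exact hfree ⟨fun a => a.elim0, fun a => a.elim0, fun a => a.elim0, fun a => a.elim0,
      fun a => a.elim0, fun a => a.elim0⟩
  have htH : t ≤ nH t k m := Nat.le_add_right _ _
  have hL1 : 1 ≤ L := by
    refine le_trans ?_ hL
    exact_mod_cast Nat.one_le_pow _ _ (by omega : 0 < g + k)
  have hLf : L ≤ fBound (ℓ - 1) L := le_self_pow₀ hL1 (by positivity)
  have hmin0 : 0 < minDeg G := by
    have : (0 : ℝ) < minDeg G := lt_of_lt_of_le (by positivity) hmin
    exact_mod_cast this
  have hDmin : minDeg G ≤ K * minDeg G := Nat.le_mul_of_pos_left _ hK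
  classical
  obtain ⟨X, hX, hlink⟩ := exists_linked_set (D := K * minDeg G) (v := v) hℓ hℓk hL1 hg
    (hL.trans hLf) (by omega) (fun u => (card_adj_le_maxDeg G u).trans hreg)
    (by push_cast; exact hcon) (by
      calc fBound (ℓ - 1) L ^ (4 * g + 2) = L ^ (5 ^ (ℓ - 1) * (4 * g + 2)) := by
            rw [fBound, ← pow_mul]
        _ ≤ L ^ (100 ^ k * nH t k m) :=
            pow_le_pow_right₀ hL1 (hg ▸ exponent_le hℓk (by omega) (by omega))
        _ ≤ minDeg G := hmin
        _ ≤ ((K * minDeg G : ℕ) : ℝ) := by exact_mod_cast hDmin)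
  exact hfree (contains_of_links m X (by omega) hlink)
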